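/- arXiv:1702.00092 — 3 statements merged into one kernel-verified Lean document; each statement's English description precedes it below -/
import Mathlib

section
/- Let K be a number field of degree n with r₁ real places (r₁ > 0), and let E_{K,4}⁺ denote the group of totally positive units ε ∈ E_K whose image in O_{K,2}ˣ lies in (1 + 4O_{K,2})·O_{K,2}ˣ² (i.e., ε is congruent to a square modulo 4 at every prime above 2). Then dim_{F₂}(E_{K,4}⁺/E_K²) ≥ dim_{F₂}(E_K⁺/E_K²) − ⌊n/2⌋, where E_K⁺ is the group of totally positive units of K. -/
open NumberField
open scoped TensorProduct

variable (K : Type*) [Field K] [NumberField K]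

/-- `O_{K,2} = O_K ⊗_ℤ ℤ₂`. -/
def OK2 : Type _ := 𝓞 K ⊗[ℤ] ℤ_[2]

noncomputable instance : CommRing (OK2 K) := inferInstanceAs (CommRing (𝓞 K ⊗[ℤ] ℤ_[2]))

/-- The canonical ring homomorphism `O_K → O_{K,2} = O_K ⊗_ℤ ℤ₂`. -/
noncomputable def iota : 𝓞 K →+* OK2 K := Algebra.TensorProduct.includeLeftRingHom

attribute [irreducible] OK2

/-- The subgroup `(1 + 4·O_{K,2})·O_{K,2}ˣ²` of `O_{K,2}ˣ`: units congruent to a square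
modulo `4`. -/
def modFourSquares : Subgroup (OK2 K)ˣ where
  carrier := {w : (OK2 K)ˣ | ∃ (a : OK2 K) (y : (OK2 K)ˣ),
    (w : OK2 K) = (1 + 4 * a) * (y : OK2 K) ^ 2}
  one_mem' := ⟨0, 1, by rw [Units.val_one]; ring⟩
  mul_mem' := by
    rintro w₁ w₂ ⟨a₁, y₁, h₁⟩ ⟨a₂, y₂, h₂⟩
    refine ⟨a₁ + a₂ + 4 * (a₁ * a₂), y₁ * y₂, ?_⟩
    rw [Units.val_mul, Units.val_mul, h₁, h₂]
    ring
  inv_mem' := by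
    rintro w ⟨a, y, h⟩
    have hww : (w : OK2 K) * ((w⁻¹ : (OK2 K)ˣ) : OK2 K) = 1 := w.mul_inv
    have hyy : (y : OK2 K) * ((y⁻¹ : (OK2 K)ˣ) : OK2 K) = 1 := y.mul_inv
    set e : OK2 K := ((w⁻¹ : (OK2 K)ˣ) : OK2 K) * (y : OK2 K) ^ 2 with he
    have h1 : (1 + 4 * a) * e = 1 := by
      calc (1 + 4 * a) * e
          = ((1 + 4 * a) * (y : OK2 K) ^ 2) * ((w⁻¹ : (OK2 K)ˣ) : OK2 K) := by
            rw [he]; ring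
        _ = (w : OK2 K) * ((w⁻¹ : (OK2 K)ˣ) : OK2 K) := by rw [← h]
        _ = 1 := hww
    have h2 : (1 : OK2 K) + 4 * (-(a * e)) = e := by linear_combination -h1
    refine ⟨-(a * e), y⁻¹, ?_⟩
    rw [h2, he]
    calc ((w⁻¹ : (OK2 K)ˣ) : OK2 K)
        = ((w⁻¹ : (OK2 K)ˣ) : OK2 K) *
            ((y : OK2 K) * ((y⁻¹ : (OK2 K)ˣ) : OK2 K)) ^ 2 := by rw [hyy]; ring
      _ = ((w⁻¹ : (OK2 K)ˣ) : OK2 K) * (y : OK2 K) ^ 2 *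
            ((y⁻¹ : (OK2 K)ˣ) : OK2 K) ^ 2 := by ring

/-- The group `E_K⁺` of totally positive units of `K`. -/
def totPosUnits : Subgroup (𝓞 K)ˣ where
  carrier := {ε : (𝓞 K)ˣ | ∀ φ : K →+* ℝ, 0 < φ (algebraMap (𝓞 K) K ε)}
  one_mem' := fun φ => by simp
  mul_mem' := by
    intro x y hx hy φ
    rw [Units.val_mul, _root_.map_mul, _root_.map_mul]
    exact mul_pos (hx φ) (hy φ)
  inv_mem' := by
    intro x hx φ
    have h : φ (algebraMap (𝓞 K) K ↑x) * φ (algebraMap (𝓞 K) K ↑x⁻¹) = 1 := by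
      rw [← _root_.map_mul, ← _root_.map_mul, Units.mul_inv, _root_.map_one, _root_.map_one]
    nlinarith [hx φ]

/-- The group `E_{K,4}⁺` of totally positive units of `K` that are congruent to a square
modulo `4` in `O_{K,2}`. -/
noncomputable def unitsFourPlus : Subgroup (𝓞 K)ˣ :=
  totPosUnits K ⊓ (modFourSquares K).comap (Units.map (iota K).toMonoidHom)

/-! Work in `R = O_K / 4` and let `ψ` be a primitive additive character of `R` induced by
`x ↦ Tr (c * x)` for a suitable `c` in the inverse different. The quadratic Gauss sum
`B(u) = ∑ x, ψ (u * x ^ 2)` of a unit `u` of `R` depends only on the class of `u` modulo squares,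
its absolute value does not depend on `u`, and the correlation `∑ g, B(g) * conj B(g * u)` over the
units `g` vanishes unless `u` is a square: by the Chinese remainder theorem this is a statement
about `O / P ^ (2 * e)`, where `P ^ e` is the exact power of a dyadic prime `P` dividing `2`. So if
`B(x) * B(y) = B(1) * B(x * y)` on a subgroup `U` containing the squares, orthogonality of the
translates of `B` yields `[U : squares] ^ 2 ≤ 2 ^ n`.

Totally positive units do satisfy this product relation. Diagonalising the form `Tr (c * ε * x ^ 2)`
over `ℚ` shows that, for suitable `N`, the Gauss sum modulo `N ^ 2` has an argument depending only
on the signature of the form, which is the same for all totally positive `ε`. Splitting `N ^ 2` into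
a power of `4` and an odd part, the power of `4` contributes a positive multiple of the sum modulo
`4`, and the sums for an odd modulus are multiplicative in `ε` up to normalisation. -/

section FiniteGroupSums

open Finset

lemma addChar_sum_eq_prod {A ι : Type*} [AddCommMonoid A] (ψ : AddChar A ℂ) (s : Finset ι)
    (f : ι → A) : ψ (∑ i ∈ s, f i) = ∏ i ∈ s, ψ (f i) :=
  map_prod ψ.toMonoidHom (fun i => Multiplicative.ofAdd (f i)) s

lemma sum_eq_zero_of_comp_equiv {X : Type*} [Fintype X] (σ : X ≃ X) {F : X → ℂ} {c : ℂ}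
    (hc : c ≠ 1) (hF : ∀ x, F (σ x) = c * F x) : ∑ x, F x = 0 := by
  have h : ∑ x, F x = c * ∑ x, F x := by rw [mul_sum, ← Equiv.sum_comp σ]; simp only [hF]
  exact (mul_eq_zero.mp (by linear_combination h : (1 - c) * ∑ x, F x = 0)).resolve_left
    (sub_ne_zero.mpr hc.symm)

variable {A B T : Type*} [AddCommGroup A] [Fintype A] [AddCommGroup B] [Fintype B]

lemma sum_comp_eq_card_ker_mul_sum_range (Φ : B →+ A) [DecidablePred (· ∈ Φ.range)] (F : A → ℂ) :
    ∑ b, F (Φ b) = Nat.card Φ.ker * ∑ a with a ∈ Φ.range, F a := by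
  classical
  have hfiber (a : A) : #{b | Φ b = a} = if a ∈ Φ.range then Nat.card Φ.ker else 0 := by
    split_ifs with ha
    · rw [AddMonoidHom.card_fiber_eq_of_mem_range Φ ha ⟨0, map_zero Φ⟩, Nat.card_eq_fintype_card,
        ← Fintype.card_subtype]
      exact Fintype.card_congr (Equiv.refl _)
    · rw [card_eq_zero, filter_eq_empty_iff]
      exact fun b _ hb => ha ⟨b, hb⟩
  rw [← sum_fiberwise univ Φ, mul_sum, sum_filter]
  refine sum_congr rfl fun a _ => ?_
  rw [sum_congr rfl (g := fun _ => F a) fun b hb => by rw [(mem_filter.mp hb).2], sum_const,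
    nsmul_eq_mul, hfiber]
  split_ifs <;> simp

variable [AddCommGroup T] [Finite T]

lemma sum_eq_sum_filter_of_addChar_translate {s : T → A} {ζ : A → AddChar T ℂ} {F : A → ℂ}
    [DecidablePred (ζ · = 1)] (hF : ∀ x t, F (x + s t) = ζ x t * F x) :
    ∑ x, F x = ∑ x with ζ x = 1, F x := by
  have := Fintype.ofFinite T
  have hT : (Fintype.card T : ℂ) ≠ 0 := Nat.cast_ne_zero.mpr Fintype.card_ne_zero
  refine mul_left_cancel₀ hT ?_
  calc (Fintype.card T : ℂ) * ∑ x, F x = ∑ t, ∑ x, F (x + s t) := by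
        have htrans (t : T) : ∑ x, F (x + s t) = ∑ x, F x :=
          Equiv.sum_comp (Equiv.addRight (s t)) F
        simp_rw [htrans, sum_const, card_univ, nsmul_eq_mul]
    _ = ∑ x, (∑ t, ζ x t) * F x := by simp_rw [hF, sum_mul]; exact sum_comm
    _ = Fintype.card T * ∑ x with ζ x = 1, F x := by
        simp_rw [AddChar.sum_eq_ite, ← AddChar.one_eq_zero, sum_filter, mul_sum, mul_ite, ite_mul,
          mul_zero, zero_mul]

/-- The terms outside the image of `Φ` cancel on averaging over the translates by `s`. -/
lemma sum_comp_eq_card_ker_mul_sum {Φ : B →+ A} {s : T → A} {ζ : A → AddChar T ℂ} {F : A → ℂ}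
    (hF : ∀ x t, F (x + s t) = ζ x t * F x) (hs : ∀ t, s t ∈ Φ.range)
    (hζ : ∀ x, ζ x = 1 → x ∈ Φ.range) :
    ∑ b, F (Φ b) = Nat.card Φ.ker * ∑ a, F a := by
  classical
  have hFΦ (x : A) (t : T) : (if x + s t ∈ Φ.range then F (x + s t) else 0) =
      ζ x t * if x ∈ Φ.range then F x else 0 := by
    simp only [AddSubgroup.add_mem_cancel_right _ (hs t), hF, mul_ite, mul_zero]
  rw [sum_comp_eq_card_ker_mul_sum_range, sum_filter,
    sum_eq_sum_filter_of_addChar_translate hFΦ, sum_eq_sum_filter_of_addChar_translate hF]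
  exact congrArg _ (sum_congr rfl fun x hx => if_pos (hζ x (mem_filter.mp hx).2))

end FiniteGroupSums

section QuadraticGaussSums

open Finset

lemma exists_addChar_mul_ne_one {R : Type*} [CommRing R] {ψ : AddChar R ℂ} (hψ : ψ.IsPrimitive)
    {s : R} (hs : s ≠ 0) : ∃ t, ψ (t * s) ≠ 1 := by
  obtain ⟨t, ht⟩ := AddChar.ne_one_iff.mp (hψ hs)
  exact ⟨t, by rwa [mul_comm, ← AddChar.mulShift_apply]⟩

variable {R : Type*} [CommRing R] [Fintype R]

/-- The quadratic Gauss sum `∑ ψ (u x²)` of an additive character of a finite commutative ring. -/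
noncomputable def quadGaussSum (ψ : AddChar R ℂ) (u : R) : ℂ := ∑ x, ψ (u * x ^ 2)

lemma quadGaussSum_mul_sq (ψ : AddChar R ℂ) (u : R) (g : Rˣ) :
    quadGaussSum ψ (u * (g : R) ^ 2) = quadGaussSum ψ u := by
  unfold quadGaussSum
  rw [← Equiv.sum_comp (Units.mulLeft g) fun x => ψ (u * x ^ 2)]
  simp only [Units.mulLeft_apply, mul_pow, mul_assoc]

lemma norm_quadGaussSum_sq {ψ : AddChar R ℂ} (hψ : ψ.IsPrimitive)
    (h2 : ∀ z : R, 2 * z = 0 → z ^ 2 = 0) (u : Rˣ) :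
    ‖quadGaussSum ψ (u : R)‖ ^ 2 = Fintype.card R * Nat.card {z : R // 2 * z = 0} := by
  classical
  have hinner (z : R) :
      ∑ x, ψ (x * (2 * u * z)) = if 2 * z = 0 then (Fintype.card R : ℂ) else 0 := by
    have hz : 2 * u * z = 0 ↔ 2 * z = 0 := by
      rw [mul_right_comm, mul_comm, Units.mul_right_eq_zero]
    simp only [AddChar.sum_mulShift _ hψ, hz]
    split_ifs <;> simp
  refine Complex.ofReal_injective ?_
  push_cast
  calc ((‖quadGaussSum ψ (u : R)‖ : ℂ)) ^ 2
      = quadGaussSum ψ u * starRingEnd ℂ (quadGaussSum ψ u) := (Complex.mul_conj' _).symm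
    _ = ∑ x, ∑ z, ψ (u * z ^ 2) * ψ (x * (2 * u * z)) := by
        unfold quadGaussSum
        rw [map_sum, sum_mul_sum, sum_comm]
        refine sum_congr rfl fun x _ => ?_
        rw [← Equiv.sum_comp (Equiv.addLeft x)]
        refine sum_congr rfl fun z _ => ?_
        rw [← AddChar.map_neg_eq_conj, ← AddChar.map_add_eq_mul, ← AddChar.map_add_eq_mul,
          Equiv.coe_addLeft]
        ring_nf
    _ = ∑ z : R, if 2 * z = 0 then (Fintype.card R : ℂ) else 0 := by
        rw [sum_comm]
        simp_rw [← mul_sum, hinner]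
        refine sum_congr rfl fun z _ => ?_
        split_ifs with hz
        · rw [h2 z hz, mul_zero, AddChar.map_zero_eq_one, one_mul]
        · rw [mul_zero]
    _ = Fintype.card R * Nat.card {z : R // 2 * z = 0} := by
        rw [← sum_filter, sum_const, nsmul_eq_mul, mul_comm, Nat.card_eq_fintype_card,
          Fintype.card_subtype (2 * · = 0)]

variable [Fintype Rˣ]

/-- The correlation `∑ᵥ B(v) conj B(v u)` over the units of the quadratic Gauss sum `B`, written
out as a triple sum (see `gaussCorrelation_eq`). -/
noncomputable def gaussCorrelation (ψ : AddChar R ℂ) (u : R) : ℂ :=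
  ∑ v : Rˣ, ∑ x : R, ∑ y : R, ψ (v * (x ^ 2 - u * y ^ 2))

lemma gaussCorrelation_eq (ψ : AddChar R ℂ) (u : R) :
    gaussCorrelation ψ u =
      ∑ v : Rˣ, quadGaussSum ψ (v : R) * starRingEnd ℂ (quadGaussSum ψ (v * u)) := by
  unfold gaussCorrelation quadGaussSum
  refine sum_congr rfl fun v _ => ?_
  rw [map_sum, sum_mul_sum]
  refine sum_congr rfl fun x _ => sum_congr rfl fun y _ => ?_
  rw [← AddChar.map_neg_eq_conj, ← AddChar.map_add_eq_mul]
  ring_nf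

lemma gaussCorrelation_ringEquiv {S : Type*} [CommRing S] [Fintype S] [Fintype Sˣ] (e : R ≃+* S)
    (ψ : AddChar S ℂ) (u : R) :
    gaussCorrelation (ψ.compAddMonoidHom (e : R →+ S)) u = gaussCorrelation ψ (e u) := by
  unfold gaussCorrelation
  rw [← Equiv.sum_comp (Units.mapEquiv (e : R ≃* S)).toEquiv]
  refine sum_congr rfl fun v _ => ?_
  rw [← Equiv.sum_comp e.toEquiv]
  refine sum_congr rfl fun x _ => ?_
  rw [← Equiv.sum_comp e.toEquiv]
  simp

lemma gaussCorrelation_pi {ι : Type*} [Fintype ι] [DecidableEq ι] {S : ι → Type*}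
    [∀ i, CommRing (S i)] [∀ i, Fintype (S i)] [∀ i, Fintype (S i)ˣ] [Fintype (∀ i, S i)ˣ]
    (ψ : AddChar (∀ i, S i) ℂ) (u : ∀ i, S i) :
    gaussCorrelation ψ u =
      ∏ i, gaussCorrelation (ψ.compAddMonoidHom (AddMonoidHom.single S i)) (u i) := by
  have hψ (z : ∀ i, S i) : ψ z = ∏ i, ψ (Pi.single i (z i)) := by
    conv_lhs => rw [← Finset.univ_sum_single z]
    exact addChar_sum_eq_prod ψ univ _
  simp_rw [gaussCorrelation, prod_univ_sum, Fintype.piFinset_univ]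
  rw [← Equiv.sum_comp MulEquiv.piUnits.symm.toEquiv]
  refine sum_congr rfl fun v _ => sum_congr rfl fun x _ => sum_congr rfl fun y _ => hψ _

end QuadraticGaussSums

section DyadicChainRings

open Finset

/-- `S` is a finite-length chain ring with uniformizer `p`, perfect residue field of
characteristic two, `2` divisible by `p ^ e`, and nilpotency index exactly `2 * e`; the model is
`O / 4` for the ring of integers `O` of a dyadic local field of ramification index `e`. -/
structure IsDyadicChainRing {S : Type*} [CommRing S] (p : S) (e : ℕ) : Prop where
  e_pos : 0 < e
  pow_eq_zero : p ^ (2 * e) = 0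
  pow_ne_zero : p ^ (2 * e - 1) ≠ 0
  pow_dvd_two : p ^ e ∣ 2
  isUnit_or_dvd : ∀ x : S, IsUnit x ∨ p ∣ x
  exists_dvd_sub_sq : ∀ x : S, ∃ s, p ∣ x - s ^ 2

namespace IsDyadicChainRing

variable {S : Type*} [CommRing S] {p : S} {e : ℕ}

lemma isUnit_add (h : IsDyadicChainRing p e) {a : S} (ha : IsUnit a) (y : S) :
    IsUnit (a + p * y) := by
  have hp : IsNilpotent (p * y) := (Commute.all _ _).isNilpotent_mul_right ⟨_, h.pow_eq_zero⟩
  rw [add_comm]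
  exact hp.isUnit_add_right_of_commute ha (Commute.all _ _)

lemma pow_dvd_or_eq_unit_mul_pow (h : IsDyadicChainRing p e) (x : S) (k : ℕ) :
    p ^ k ∣ x ∨ ∃ i < k, ∃ a : Sˣ, x = a * p ^ i := by
  induction k with
  | zero => simp
  | succ k ih =>
    rcases ih with ⟨y, rfl⟩ | ⟨i, hi, a, ha⟩
    · rcases h.isUnit_or_dvd y with ⟨a, rfl⟩ | hy
      · exact .inr ⟨k, k.lt_succ_self, a, mul_comm _ _⟩
      · exact .inl (pow_succ p k ▸ mul_dvd_mul_left _ hy)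
    · exact .inr ⟨i, by lia, a, ha⟩

lemma not_pow_dvd_unit_mul_pow (h : IsDyadicChainRing p e) {l m : ℕ} (hlm : l < m)
    (hl : l < 2 * e) (a : Sˣ) : ¬ p ^ m ∣ a * p ^ l := by
  intro hdvd
  have hsucc : p ^ (l + 1) ∣ p ^ l := (pow_dvd_pow p hlm).trans (Units.dvd_mul_left.mp hdvd)
  refine h.pow_ne_zero (zero_dvd_iff.mp ?_)
  convert mul_dvd_mul_right hsucc (p ^ (2 * e - 1 - l)) using 1
  · rw [← pow_add, show l + 1 + (2 * e - 1 - l) = 2 * e by lia, h.pow_eq_zero]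
  · rw [← pow_add]; congr 1; lia

lemma pow_dvd_of_pow_add_dvd_pow_mul (h : IsDyadicChainRing p e) {i m : ℕ} {x : S}
    (him : i + m ≤ 2 * e) (hx : p ^ (i + m) ∣ p ^ i * x) : p ^ m ∣ x := by
  refine (h.pow_dvd_or_eq_unit_mul_pow x m).resolve_right ?_
  rintro ⟨l, hl, a, rfl⟩
  rw [mul_left_comm, ← pow_add] at hx
  exact h.not_pow_dvd_unit_mul_pow (by lia) (by lia) a hx

lemma pow_dvd_of_mul_eq_zero (h : IsDyadicChainRing p e) {x : S} (hx : p * x = 0) :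
    p ^ (2 * e - 1) ∣ x := by
  have := h.e_pos
  exact h.pow_dvd_of_pow_add_dvd_pow_mul (i := 1) (by lia) (by simp [hx])

lemma pow_succ_dvd_of_dvd_sq (h : IsDyadicChainRing p e) {k : ℕ} {y : S} (hk : k < e)
    (hy : p ^ (2 * k + 1) ∣ y ^ 2) : p ^ (k + 1) ∣ y := by
  refine (h.pow_dvd_or_eq_unit_mul_pow y (k + 1)).resolve_right ?_
  rintro ⟨l, hl, a, rfl⟩
  rw [mul_pow, ← pow_mul, ← Units.val_pow_eq_pow_val] at hy
  exact h.not_pow_dvd_unit_mul_pow (by lia) (by lia) (a ^ 2) hy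

lemma exists_pow_succ_dvd_sub_sq (h : IsDyadicChainRing p e) {u w : S} {i : ℕ} (hi : i < e)
    (hw : p ^ (2 * i) ∣ u - w ^ 2) : ∃ w', p ^ (2 * i + 1) ∣ u - w' ^ 2 := by
  obtain ⟨a, ha⟩ := hw
  obtain ⟨s, c, hs⟩ := h.exists_dvd_sub_sq a
  have hcross : p ^ (2 * i + 1) ∣ 2 * (w * s) * p ^ i :=
    (pow_dvd_pow p (by lia : 2 * i + 1 ≤ e + i)).trans
      (pow_add p e i ▸ mul_dvd_mul_right (h.pow_dvd_two.mul_right _) _)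
  refine ⟨w + s * p ^ i, ?_⟩
  have hexpand : u - (w + s * p ^ i) ^ 2 = p ^ (2 * i + 1) * c - 2 * (w * s) * p ^ i := by
    linear_combination ha + p ^ (2 * i) * hs
  exact hexpand ▸ (dvd_mul_right _ _).sub hcross

/-- The quadratic defect of a nonsquare has odd valuation. -/
lemma exists_eq_sq_add_unit_mul_pow (h : IsDyadicChainRing p e) {u : S} (hu : ¬ IsSquare u) :
    ∃ (w : S) (a : Sˣ) (j k : ℕ), j + k + 1 = e ∧ u = w ^ 2 + a * p ^ (2 * j + 1) := by
  obtain ⟨f, hf, ⟨w, a, ha⟩, hmax⟩ :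
      ∃ f < 2 * e, (∃ w, p ^ f ∣ u - w ^ 2) ∧ ¬ ∃ w, p ^ (f + 1) ∣ u - w ^ 2 := by
    by_contra! hstep
    have hall (k : ℕ) (hk : k ≤ 2 * e) : ∃ w, p ^ k ∣ u - w ^ 2 := by
      induction k with
      | zero => simp
      | succ k ih => exact hstep k hk (ih (by lia))
    obtain ⟨w, hw⟩ := hall _ le_rfl
    rw [h.pow_eq_zero, zero_dvd_iff, sub_eq_zero, sq] at hw
    exact hu ⟨w, hw⟩
  obtain ⟨a, rfl⟩ := (h.isUnit_or_dvd a).resolve_right fun hpa =>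
    hmax ⟨w, ha ▸ pow_succ p f ▸ mul_dvd_mul_left _ hpa⟩
  obtain ⟨j, rfl | rfl⟩ := Nat.even_or_odd' f
  · exact absurd (h.exists_pow_succ_dvd_sub_sq (by lia) ⟨_, ha⟩) hmax
  · exact ⟨w, a, j, e - 1 - j, by lia, by linear_combination ha⟩

lemma pow_dvd_of_mul_unit_mul_pow_mul_sq_eq_zero (h : IsDyadicChainRing p e) {a : Sˣ} {y : S}
    {j k : ℕ} (hjk : j + k + 1 = e) (hy : p * (a * p ^ (2 * j + 1) * y ^ 2) = 0) : p ^ k ∣ y := by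
  have hsq : p ^ (2 * j + 2) * y ^ 2 = 0 :=
    (Units.mul_right_eq_zero a).mp (by linear_combination hy)
  have hdvd : p ^ (2 * k) ∣ y ^ 2 :=
    h.pow_dvd_of_pow_add_dvd_pow_mul (i := 2 * j + 2) (by lia) (by simp [hsq])
  cases k with
  | zero => simp
  | succ k => exact h.pow_succ_dvd_of_dvd_sq (by lia) ((pow_dvd_pow p (by lia)).trans hdvd)

/-- The last term has odd valuation, so it cannot cancel `z ^ 2`. -/
lemma pow_dvd_of_mul_eq_zero_of_form (h : IsDyadicChainRing p e) {a : Sˣ} {w y z : S} {j : ℕ}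
    (hz : p * (z ^ 2 + 2 * w * y * z - a * p ^ (2 * j + 1) * y ^ 2) = 0) : p ^ e ∣ z := by
  suffices ∀ i ≤ e, p ^ i ∣ z from this e le_rfl
  intro i
  induction i with
  | zero => simp
  | succ i ih =>
    intro hi
    obtain ⟨c, rfl⟩ := ih (by lia)
    have hform := (pow_dvd_pow p (by lia : 2 * i + 1 ≤ 2 * e - 1)).trans
      (h.pow_dvd_of_mul_eq_zero hz)
    have hcross : p ^ (2 * i + 1) ∣ 2 * (w * y * c) * p ^ i :=
      (pow_dvd_pow p (by lia : 2 * i + 1 ≤ e + i)).trans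
        (pow_add p e i ▸ mul_dvd_mul_right (h.pow_dvd_two.mul_right _) _)
    have hlast_even : p ^ (2 * i) ∣ p ^ (2 * j + 1) * y ^ 2 := by
      refine (Units.dvd_mul_left (u := a)).mp ?_
      have heq : a * (p ^ (2 * j + 1) * y ^ 2) = p ^ (2 * i) * c ^ 2 + 2 * (w * y * c) * p ^ i -
          ((p ^ i * c) ^ 2 + 2 * w * y * (p ^ i * c) - a * p ^ (2 * j + 1) * y ^ 2) := by ring
      have hle := pow_dvd_pow p (Nat.le_succ (2 * i))
      exact heq ▸ ((dvd_mul_right _ _).add (hle.trans hcross)).sub (hle.trans hform)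
    have hlast : p ^ (2 * i + 1) ∣ p ^ (2 * j + 1) * y ^ 2 := by
      rcases le_or_gt i j with hij | hij
      · exact (pow_dvd_pow p (by lia)).mul_right _
      · obtain ⟨k, rfl⟩ := Nat.exists_eq_add_of_lt hij
        have hysq : p ^ (2 * k + 1) ∣ y ^ 2 :=
          h.pow_dvd_of_pow_add_dvd_pow_mul (i := 2 * j + 1) (by lia)
            (by convert hlast_even using 2; ring)
        have hy := pow_dvd_pow_of_dvd (h.pow_succ_dvd_of_dvd_sq (by lia) hysq) 2
        convert mul_dvd_mul_left (p ^ (2 * j + 1)) hy using 1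
        ring
    refine h.pow_succ_dvd_of_dvd_sq (by lia) ?_
    have heq : (p ^ i * c) ^ 2 =
        (p ^ i * c) ^ 2 + 2 * w * y * (p ^ i * c) - a * p ^ (2 * j + 1) * y ^ 2 -
          2 * (w * y * c) * p ^ i + a * (p ^ (2 * j + 1) * y ^ 2) := by ring
    exact heq ▸ (hform.sub hcross).add (hlast.mul_left _)

variable {ψ : AddChar S ℂ}

lemma sum_units_addChar_mul_eq_zero [Fintype Sˣ] (h : IsDyadicChainRing p e)
    (hψ : ψ.IsPrimitive) {s : S} (hs : p * s ≠ 0) : ∑ v : Sˣ, ψ (v * s) = 0 := by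
  obtain ⟨t, ht⟩ := exists_addChar_mul_ne_one hψ hs
  let σ : Sˣ ≃ Sˣ :=
    { toFun := fun v => (h.isUnit_add v.isUnit t).unit
      invFun := fun v => (h.isUnit_add v.isUnit (-t)).unit
      left_inv := fun v => by ext; simp
      right_inv := fun v => by ext; simp }
  refine sum_eq_zero_of_comp_equiv σ ht fun v => ?_
  rw [← AddChar.map_add_eq_mul]
  congr 1
  simp only [σ, Equiv.coe_fn_mk, IsUnit.unit_spec]
  ring

lemma exists_addChar_pow_mul_sq_ne_one (h : IsDyadicChainRing p e) (hψ : ψ.IsPrimitive) (a : Sˣ) :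
    ∃ s, ψ (a * p ^ (2 * e - 1) * s ^ 2) ≠ 1 := by
  obtain ⟨t, ht⟩ := exists_addChar_mul_ne_one hψ h.pow_ne_zero
  obtain ⟨s, c, hs⟩ := h.exists_dvd_sub_sq (↑a⁻¹ * t)
  have hp : p * p ^ (2 * e - 1) = 0 := by
    rw [← pow_succ', Nat.sub_add_cancel (by have := h.e_pos; lia), h.pow_eq_zero]
  refine ⟨s, ?_⟩
  convert ht using 2
  linear_combination (-a * p ^ (2 * e - 1)) * hs - a * c * hp + t * p ^ (2 * e - 1) * a.mul_inv

variable [Fintype S]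

lemma sum_addChar_unit_mul_pow_mul_sq_eq_zero (h : IsDyadicChainRing p e) (hψ : ψ.IsPrimitive)
    (a : Sˣ) {j k : ℕ} (hjk : j + k + 1 = e) [DecidablePred (p ^ k ∣ · : S → Prop)] :
    ∑ y with p ^ k ∣ y, ψ (a * p ^ (2 * j + 1) * y ^ 2) = 0 := by
  obtain ⟨s, hs⟩ := h.exists_addChar_pow_mul_sq_ne_one hψ a
  subst hjk
  rw [sum_filter]
  refine sum_eq_zero_of_comp_equiv (Equiv.addRight (p ^ k * s)) hs fun y => ?_
  rw [Equiv.coe_addRight]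
  by_cases hy : p ^ k ∣ y
  · rw [if_pos hy, if_pos (hy.add (dvd_mul_right _ _)), ← AddChar.map_add_eq_mul]
    congr 1
    obtain ⟨b, hb⟩ := h.pow_dvd_two
    obtain ⟨y, rfl⟩ := hy
    have hzero := h.pow_eq_zero
    rw [show 2 * (j + k + 1) - 1 = 2 * j + 1 + 2 * k by lia]
    linear_combination (a * p ^ (2 * j + 1) * p ^ (2 * k) * y * s) * hb +
      (a * y * s * b * p ^ (j + k)) * hzero
  · rw [if_neg hy, if_neg (by rwa [dvd_add_left (dvd_mul_right _ _)]), mul_zero]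

theorem gaussCorrelation_eq_zero [Fintype Sˣ] (h : IsDyadicChainRing p e) (hψ : ψ.IsPrimitive)
    {u : S} (hu : ¬ IsSquare u) : gaussCorrelation ψ u = 0 := by
  classical
  obtain ⟨w, a, j, k, hjk, rfl⟩ := h.exists_eq_sq_add_unit_mul_pow hu
  have hsubst : gaussCorrelation ψ (w ^ 2 + a * p ^ (2 * j + 1)) = ∑ z : S, ∑ y : S, ∑ v : Sˣ,
      ψ (v * (z ^ 2 + 2 * w * y * z - a * p ^ (2 * j + 1) * y ^ 2)) := by
    unfold gaussCorrelation
    rw [sum_comm_cycle]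
    conv_rhs => rw [sum_comm_cycle, sum_comm_cycle]
    refine sum_congr rfl fun y _ => sum_congr rfl fun v _ => ?_
    rw [← Equiv.sum_comp (Equiv.addRight (w * y))]
    refine sum_congr rfl fun z _ => ?_
    rw [Equiv.coe_addRight]
    ring_nf
  rw [hsubst]
  refine sum_eq_zero fun z _ => ?_
  by_cases hz : p ^ e ∣ z
  · have hform (y : S) :
        z ^ 2 + 2 * w * y * z - a * p ^ (2 * j + 1) * y ^ 2 = -a * p ^ (2 * j + 1) * y ^ 2 := by
      obtain ⟨b, hb⟩ := h.pow_dvd_two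
      obtain ⟨z, rfl⟩ := hz
      linear_combination (z ^ 2 + b * w * y * z) * h.pow_eq_zero + w * y * p ^ e * z * hb
    have hlocal (y : S) (hy : ¬ p ^ k ∣ y) :
        ∑ v : Sˣ, ψ (v * (-a * p ^ (2 * j + 1) * y ^ 2)) = 0 :=
      h.sum_units_addChar_mul_eq_zero hψ fun h0 =>
        hy (h.pow_dvd_of_mul_unit_mul_pow_mul_sq_eq_zero (a := -a) hjk (by simpa using h0))
    simp_rw [hform]
    rw [← sum_filter_of_ne fun y _ hne => not_not.mp fun hy => hne (hlocal y hy), sum_comm]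
    refine sum_eq_zero fun v _ => ?_
    simpa [mul_assoc] using h.sum_addChar_unit_mul_pow_mul_sq_eq_zero hψ (v * -a) hjk
  · exact sum_eq_zero fun y _ => h.sum_units_addChar_mul_eq_zero hψ fun h0 =>
      hz (h.pow_dvd_of_mul_eq_zero_of_form h0)

end IsDyadicChainRing

end DyadicChainRings

section IsotropicBound

open Finset

variable {G : Type*} [CommGroup G] [Fintype G] {B : G → ℂ} {c : ℝ} {Q U : Subgroup G}

lemma sum_translate_correlation_of_mem (hc : ∀ g, ‖B g‖ ^ 2 = c)
    (hQ : ∀ g, ∀ q ∈ Q, B (g * q) = B g) {x y : G} (hxy : x⁻¹ * y ∈ Q) :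
    ∑ v, B (v * x) * starRingEnd ℂ (B (v * y)) * (starRingEnd ℂ (B x) * B y) =
      Fintype.card G * (c : ℂ) ^ 2 := by
  have hnorm (g : G) : B g * starRingEnd ℂ (B g) = c := by
    rw [Complex.mul_conj', ← hc g]; push_cast; rfl
  have hB (v : G) : B (v * y) = B (v * x) := by
    rw [← hQ (v * x) _ hxy, mul_assoc, mul_inv_cancel_left]
  have hxy' : B y = B x := by simpa using hB 1
  simp_rw [hB, hxy', hnorm, mul_comm (starRingEnd ℂ (B x)), hnorm]
  rw [sum_const, card_univ, nsmul_eq_mul, sq]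

lemma sum_translate_correlation_of_notMem
    (horth : ∀ u ∉ Q, ∑ v, B v * starRingEnd ℂ (B (v * u)) = 0) {x y : G} (hxy : x⁻¹ * y ∉ Q) :
    ∑ v, B (v * x) * starRingEnd ℂ (B (v * y)) = 0 := by
  rw [← horth _ hxy, ← Equiv.sum_comp (Equiv.mulRight x)
    fun v => B v * starRingEnd ℂ (B (v * (x⁻¹ * y)))]
  simp [mul_assoc]

lemma card_filter_inv_mul_mem [DecidablePred (· ∈ U)] [DecidablePred (· ∈ Q)] (hQU : Q ≤ U)
    {x : G} (hx : x ∈ U) : #{y | y ∈ U ∧ x⁻¹ * y ∈ Q} = Nat.card Q := by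
  rw [Nat.card_eq_fintype_card, ← Fintype.card_subtype]
  refine Fintype.card_congr ((Equiv.mulLeft x⁻¹).subtypeEquiv fun y => ?_)
  exact and_iff_right_of_imp fun hy => by
    simpa using U.mul_mem hx (hQU hy)

lemma sum_norm_sq_translate_correlation [DecidablePred (· ∈ U)] (hQU : Q ≤ U)
    (hc : ∀ g, ‖B g‖ ^ 2 = c) (hQ : ∀ g, ∀ q ∈ Q, B (g * q) = B g)
    (horth : ∀ u ∉ Q, ∑ v, B v * starRingEnd ℂ (B (v * u)) = 0) :
    ∑ v, ‖∑ x with x ∈ U, B (v * x) * starRingEnd ℂ (B x)‖ ^ 2 =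
      Nat.card U * Nat.card Q * (Fintype.card G * c ^ 2) := by
  classical
  refine Complex.ofReal_injective ?_
  push_cast
  calc ∑ v, (‖∑ x with x ∈ U, B (v * x) * starRingEnd ℂ (B x)‖ : ℂ) ^ 2
      = ∑ x with x ∈ U, ∑ y with y ∈ U, ∑ v,
          B (v * x) * starRingEnd ℂ (B (v * y)) * (starRingEnd ℂ (B x) * B y) := by
        rw [sum_comm_cycle]
        refine sum_congr rfl fun v _ => ?_
        rw [← Complex.mul_conj', map_sum, sum_mul_sum]
        refine sum_congr rfl fun x _ => sum_congr rfl fun y _ => ?_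
        rw [map_mul, Complex.conj_conj]
        ring
    _ = ∑ x with x ∈ U, ∑ y with y ∈ U,
          if x⁻¹ * y ∈ Q then Fintype.card G * (c : ℂ) ^ 2 else 0 := by
        refine sum_congr rfl fun x _ => sum_congr rfl fun y _ => ?_
        split_ifs with hxy
        · exact sum_translate_correlation_of_mem hc hQ hxy
        · rw [← sum_mul, sum_translate_correlation_of_notMem horth hxy, zero_mul]
    _ = ∑ x with x ∈ U, Nat.card Q * (Fintype.card G * (c : ℂ) ^ 2) := by
        refine sum_congr rfl fun x hx => ?_
        rw [← sum_filter, filter_filter, sum_const, nsmul_eq_mul,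
          card_filter_inv_mul_mem hQU (mem_filter.mp hx).2]
    _ = Nat.card U * Nat.card Q * (Fintype.card G * (c : ℂ) ^ 2) := by
        rw [sum_const, nsmul_eq_mul, Nat.card_eq_fintype_card (α := U), ← Fintype.card_subtype]
        ring

lemma norm_translate_correlation_of_mem [DecidablePred (· ∈ U)] (hpos : 0 < c)
    (hc : ∀ g, ‖B g‖ ^ 2 = c) (hmul : ∀ x ∈ U, ∀ y ∈ U, B x * B y = B 1 * B (x * y))
    {v : G} (hv : v ∈ U) :
    ‖∑ x with x ∈ U, B (v * x) * starRingEnd ℂ (B x)‖ = Nat.card U * c := by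
  have hterm (x : G) (hx : x ∈ U) :
      B (v * x) * starRingEnd ℂ (B x) = B v * starRingEnd ℂ (B 1) := by
    have h1 : B 1 ≠ 0 := fun h => by simpa [h, hpos.ne] using hc 1
    have hnorm (g : G) : B g * starRingEnd ℂ (B g) = c := by
      rw [Complex.mul_conj', ← hc g]; push_cast; rfl
    refine mul_left_cancel₀ h1 ?_
    linear_combination -starRingEnd ℂ (B x) * hmul v hv x hx + B v * hnorm x - B v * hnorm 1
  have hB (g : G) : ‖B g‖ = √c := by rw [← hc g, Real.sqrt_sq (norm_nonneg _)]
  rw [sum_congr rfl fun x hx => hterm x (mem_filter.mp hx).2, sum_const, nsmul_eq_mul, norm_mul,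
    norm_mul, RCLike.norm_conj, hB, hB, Real.mul_self_sqrt hpos.le, RCLike.norm_natCast,
    Nat.card_eq_fintype_card (α := U), ← Fintype.card_subtype]

-- Compute the second moment of `v ↦ ∑_{x ∈ U} B (v x) conj (B x)` exactly, and bound it from below
-- by the contribution of `v ∈ U`.
theorem card_sq_le_of_multiplicative_on (hpos : 0 < c) (hc : ∀ g, ‖B g‖ ^ 2 = c) (hQU : Q ≤ U)
    (hQ : ∀ g, ∀ q ∈ Q, B (g * q) = B g)
    (horth : ∀ u ∉ Q, ∑ v, B v * starRingEnd ℂ (B (v * u)) = 0)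
    (hmul : ∀ x ∈ U, ∀ y ∈ U, B x * B y = B 1 * B (x * y)) :
    Nat.card U ^ 2 ≤ Nat.card G * Nat.card Q := by
  classical
  have hsecond := sum_norm_sq_translate_correlation hQU hc hQ horth
  have hlower : Nat.card U * (Nat.card U * c) ^ 2 ≤
      ∑ v, ‖∑ x with x ∈ U, B (v * x) * starRingEnd ℂ (B x)‖ ^ 2 := by
    refine le_trans (le_of_eq ?_) (sum_le_univ_sum_of_nonneg (s := {v | v ∈ U})
      fun v => sq_nonneg _)
    rw [sum_congr rfl fun v hv => by
      rw [norm_translate_correlation_of_mem hpos hc hmul (mem_filter.mp hv).2], sum_const,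
      nsmul_eq_mul, Nat.card_eq_fintype_card, ← Fintype.card_subtype]
  have hU : (0 : ℝ) < Nat.card U := by exact_mod_cast Nat.card_pos
  have hcard : (Nat.card U : ℝ) * c ^ 2 * Nat.card U ^ 2 ≤
      Nat.card U * c ^ 2 * (Nat.card G * Nat.card Q) := by
    rw [Nat.card_eq_fintype_card (α := G)]
    linarith
  exact_mod_cast le_of_mul_le_mul_left hcard (by positivity)

end IsotropicBound

section OddModulus

open Finset Polynomial

lemma isSquare_one_add_of_isNilpotent {R : Type*} [CommRing R] (h2 : IsUnit (2 : R)) {ν : R}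
    (hν : IsNilpotent ν) : IsSquare (1 + ν) := by
  obtain ⟨r, ⟨-, hr⟩, -⟩ := existsUnique_nilpotent_sub_and_aeval_eq_zero (R := R) (S := R)
    (P := X ^ 2 - C (1 + ν)) (x := 1) (by simpa using hν.neg)
    (by simpa [derivative_pow] using h2)
  exact isSquare_iff_exists_sq _ |>.mpr ⟨r, by simp at hr; linear_combination -hr⟩

lemma exists_mul_sq_add_mul_sq_eq_one_of_field {F : Type*} [Field F] [Finite F] (h2 : (2 : F) ≠ 0)
    {ε η : F} (hε : ε ≠ 0) (hη : η ≠ 0) : ∃ a b : F, ε * a ^ 2 + η * b ^ 2 = 1 := by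
  have := Fintype.ofFinite F
  have hodd : Fintype.card F % 2 = 1 := FiniteField.odd_card_of_char_ne_two fun h => h2 <| by
    simpa [h] using ringChar.Nat.cast_ringChar (R := F)
  obtain ⟨a, b, hab⟩ := FiniteField.exists_root_sum_quadratic (f := C ε * X ^ 2)
    (g := C η * X ^ 2 + C 0 * X + C (-1)) (degree_C_mul_X_pow 2 hε) (degree_quadratic hη) hodd
  simp only [eval_add, eval_mul, eval_C, eval_pow, eval_X] at hab
  exact ⟨a, b, by linear_combination hab⟩

lemma exists_isNilpotent_sub_one_of_forall_maximal {R : Type*} [CommRing R] [Finite R] (ε η : R)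
    (h : ∀ m : MaximalSpectrum R, ∃ a b : R ⧸ m.asIdeal,
      Ideal.Quotient.mk m.asIdeal ε * a ^ 2 + Ideal.Quotient.mk m.asIdeal η * b ^ 2 = 1) :
    ∃ a b : R, IsNilpotent (ε * a ^ 2 + η * b ^ 2 - 1) := by
  choose a b hab using h
  have hsurj := Ideal.pi_quotient_surjective (I := fun m : MaximalSpectrum R => m.asIdeal)
    fun m m' hm => m.isCoprime_of_ne hm
  obtain ⟨a', ha⟩ := hsurj a
  obtain ⟨b', hb⟩ := hsurj b
  refine ⟨a', b', nilpotent_iff_mem_prime.mpr fun J hJ => ?_⟩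
  have hJm := IsArtinianRing.isMaximal_of_isPrime J
  rw [← Ideal.Quotient.eq_zero_iff_mem, map_sub, map_one, sub_eq_zero]
  simpa [← ha ⟨J, hJm⟩, ← hb ⟨J, hJm⟩] using hab ⟨J, hJm⟩

lemma exists_mul_sq_add_mul_sq_eq_one {R : Type*} [CommRing R] [Finite R] (h2 : IsUnit (2 : R))
    (ε η : Rˣ) : ∃ a b : R, ε * a ^ 2 + η * b ^ 2 = 1 := by
  obtain ⟨a, b, hab⟩ := exists_isNilpotent_sub_one_of_forall_maximal (ε : R) η fun m => by
    have := m.isMaximal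
    let _ : Field (R ⧸ m.asIdeal) := Ideal.Quotient.field _
    have : Finite (R ⧸ m.asIdeal) := Finite.of_surjective _ Ideal.Quotient.mk_surjective
    exact exists_mul_sq_add_mul_sq_eq_one_of_field
      (map_ofNat (Ideal.Quotient.mk m.asIdeal) 2 ▸ (h2.map (Ideal.Quotient.mk m.asIdeal)).ne_zero)
      (ε.isUnit.map (Ideal.Quotient.mk m.asIdeal)).ne_zero
      (η.isUnit.map (Ideal.Quotient.mk m.asIdeal)).ne_zero
  obtain ⟨r, hr⟩ := isSquare_one_add_of_isNilpotent h2 hab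
  have hunit : IsUnit (r * r) := hr ▸ hab.isUnit_one_add
  obtain ⟨s, hs⟩ := (isUnit_of_mul_isUnit_left hunit).exists_right_inv
  refine ⟨a * s, b * s, ?_⟩
  linear_combination s ^ 2 * hr + (r * s + 1) * hs

-- With `ε a² + η b² = 1`, the substitution below carries the form `ε x² + η y²` to `x² + ε η y²`.
theorem quadGaussSum_mul_quadGaussSum_of_isUnit_two {R : Type*} [CommRing R] [Fintype R]
    (h2 : IsUnit (2 : R)) (ψ : AddChar R ℂ) (ε η : Rˣ) :
    quadGaussSum ψ (ε : R) * quadGaussSum ψ (η : R) =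
      quadGaussSum ψ 1 * quadGaussSum ψ (ε * η : R) := by
  obtain ⟨a, b, hab⟩ := exists_mul_sq_add_mul_sq_eq_one h2 ε η
  let e : R × R ≃ R × R :=
    { toFun := fun q => (a * q.1 - η * b * q.2, b * q.1 + ε * a * q.2)
      invFun := fun q => (ε * a * q.1 + η * b * q.2, -b * q.1 + a * q.2)
      left_inv := fun q => Prod.ext (by linear_combination q.1 * hab)
        (by linear_combination q.2 * hab)
      right_inv := fun q => Prod.ext (by linear_combination q.1 * hab)
        (by linear_combination q.2 * hab) }
  simp_rw [quadGaussSum, sum_mul_sum, ← Fintype.sum_prod_type', ← AddChar.map_add_eq_mul]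
  rw [← Equiv.sum_comp e]
  refine sum_congr rfl fun q _ => congrArg ψ ?_
  simp only [e, Equiv.coe_fn_mk]
  linear_combination (q.1 ^ 2 + ε * η * q.2 ^ 2) * hab

end OddModulus

section GaussSumPhase

open Complex Real Filter Topology

lemma ofReal_mul_cpow_half {r : ℝ} (hr : 0 < r) {z : ℂ} (hz : z ≠ 0) :
    ((r : ℂ) * z) ^ (1 / 2 : ℂ) = √r * z ^ (1 / 2 : ℂ) := by
  have hr' : (r : ℂ) ≠ 0 := by exact_mod_cast hr.ne'
  rw [Real.sqrt_eq_rpow, Complex.ofReal_cpow hr.le, Complex.cpow_def_of_ne_zero hz,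
    Complex.cpow_def_of_ne_zero (mul_ne_zero hr' hz), Complex.cpow_def_of_ne_zero hr',
    Complex.log_ofReal_mul hr hz, ← Complex.exp_add, Complex.ofReal_log hr.le]
  push_cast
  ring_nf

lemma tendsto_one_div_mul_nhdsGT_zero {c : ℝ} (hc : 0 < c) :
    Tendsto (fun t : ℝ => 1 / (c * t)) (𝓝[>] 0) atTop :=
  ((tendsto_inv_nhdsGT_zero (𝕜 := ℝ)).const_mul_atTop (inv_pos.mpr hc)).congr fun t => by
    rw [one_div, mul_inv]

lemma tendsto_cosKernel_atTop (a : UnitAddCircle) :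
    Tendsto (HurwitzZeta.cosKernel a) atTop (𝓝 1) := by
  obtain ⟨p, hp, h⟩ := HurwitzZeta.isBigO_atTop_cosKernel_sub a
  have hexp : Tendsto (fun x : ℝ => rexp (-p * x)) atTop (𝓝 0) :=
    Real.tendsto_exp_atBot.comp (tendsto_id.const_mul_atTop_of_neg (neg_neg_of_pos hp))
  simpa using (h.trans_tendsto hexp).add_const 1

lemma tendsto_jacobiTheta_comap_im_atTop : Tendsto jacobiTheta (comap im atTop) (𝓝 1) := by
  have hexp : Tendsto (fun τ : ℂ => rexp (-π * τ.im)) (comap im atTop) (𝓝 0) :=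
    Real.tendsto_exp_atBot.comp
      (tendsto_comap.const_mul_atTop_of_neg (neg_neg_of_pos Real.pi_pos))
  simpa using (isBigO_at_im_infty_jacobiTheta_sub_one.trans_tendsto hexp).add_const 1

lemma jacobiTheta_eq_jacobiTheta_neg_one_div (τ : ℂ) :
    jacobiTheta τ = 1 / (-I * τ) ^ (1 / 2 : ℂ) * jacobiTheta (-1 / τ) := by
  simpa [jacobiTheta_eq_jacobiTheta₂] using jacobiTheta₂_functional_equation 0 τ

lemma jacobiTheta_add_two_mul_natCast (τ : ℂ) (a : ℕ) :
    jacobiTheta (τ + 2 * a) = jacobiTheta τ := by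
  induction a with
  | zero => simp
  | succ a ih =>
    rw [← ih, ← jacobiTheta_two_add (τ + 2 * a)]
    push_cast
    ring_nf

variable {N : ℕ} [NeZero N]

lemma cexp_sq_div_mul_add (hN : Even N) (k m : ℤ) :
    cexp (π * I * ((m * N + k : ℤ) : ℂ) ^ 2 / N) = cexp (π * I * (k : ℂ) ^ 2 / N) := by
  obtain ⟨a, rfl⟩ := hN
  have ha : (a : ℂ) ≠ 0 := by
    rintro h
    exact NeZero.ne (a + a) (by simpa using h)
  refine Complex.exp_eq_exp_iff_exists_int.mpr ⟨m * k + m ^ 2 * a, ?_⟩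
  push_cast
  field_simp
  ring

lemma hasSum_jacobiTheta_residueClass (hN : Even N) {t : ℝ} (ht : 0 < t) (k : Fin N) :
    HasSum (fun m : ℤ => cexp (π * I * ((m * N + k : ℤ) : ℂ) ^ 2 * (1 / N + I * t)))
      (cexp (π * I * (k : ℂ) ^ 2 / N) *
        HurwitzZeta.evenKernel ((k / N : ℝ) : UnitAddCircle) (N ^ 2 * t)) := by
  have hN0 : (N : ℂ) ≠ 0 := by exact_mod_cast NeZero.ne N
  refine ((Complex.hasSum_ofReal.mpr (HurwitzZeta.hasSum_int_evenKernel (k / N : ℝ)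
    (t := N ^ 2 * t) (by have := NeZero.pos N; positivity))).mul_left _).congr_fun fun m => ?_
  rw [mul_add, Complex.exp_add, mul_one_div, cexp_sq_div_mul_add hN, Complex.ofReal_exp]
  congr 2
  push_cast
  field_simp
  ring_nf
  rw [Complex.I_sq]
  ring

omit [NeZero N] in
lemma one_div_add_I_mul_im (t : ℝ) : (1 / N + I * t : ℂ).im = t := by
  simp [← ofReal_natCast, ← ofReal_inv]

lemma sqrt_mul_jacobiTheta_eq_sum (hN : Even N) {t : ℝ} (ht : 0 < t) :
    √t * jacobiTheta (1 / N + I * t) =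
      ∑ k : Fin N, cexp (π * I * (k : ℂ) ^ 2 / N) * (1 / N) *
        HurwitzZeta.cosKernel ((k / N : ℝ) : UnitAddCircle) (1 / (N ^ 2 * t)) := by
  have hN0 : (N : ℂ) ≠ 0 := by exact_mod_cast NeZero.ne N
  have ht0 : (√t : ℂ) ≠ 0 := by exact_mod_cast (Real.sqrt_pos.mpr ht).ne'
  have htheta : HasSum (fun n : ℤ => cexp (π * I * (n : ℂ) ^ 2 * (1 / N + I * t)))
      (jacobiTheta (1 / N + I * t)) := by
    simpa [jacobiTheta₂_term, ← jacobiTheta_eq_jacobiTheta₂] using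
      hasSum_jacobiTheta₂_term 0 (ht.trans_eq (one_div_add_I_mul_im (N := N) t).symm)
  have hprod := ((Equiv.prodComm (Fin N) ℤ).trans (Int.divModEquiv N).symm).hasSum_iff.mpr htheta
  have hfiber := hprod.prod_fiberwise (hasSum_jacobiTheta_residueClass hN ht)
  have hsqrt : ((N : ℝ) ^ 2 * t) ^ (1 / 2 : ℝ) = N * √t := by
    rw [← Real.sqrt_eq_rpow, Real.sqrt_mul (by positivity), Real.sqrt_sq (by positivity)]
  rw [hfiber.unique (hasSum_fintype _), Finset.mul_sum]
  refine Finset.sum_congr rfl fun k _ => ?_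
  rw [HurwitzZeta.evenKernel_functional_equation, hsqrt]
  push_cast
  field_simp

lemma tendsto_sqrt_mul_jacobiTheta_sum (hN : Even N) :
    Tendsto (fun t : ℝ => √t * jacobiTheta (1 / N + I * t)) (𝓝[>] 0)
      (𝓝 (∑ k : Fin N, cexp (π * I * (k : ℂ) ^ 2 / N) * (1 / N))) := by
  have hN0 : (0 : ℝ) < N ^ 2 := by have := NeZero.pos N; positivity
  have hlim (k : Fin N) : Tendsto (fun t : ℝ => (HurwitzZeta.cosKernel
      ((k / N : ℝ) : UnitAddCircle) (1 / (N ^ 2 * t)) : ℂ)) (𝓝[>] 0) (𝓝 1) :=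
    (Complex.continuous_ofReal.tendsto' 1 1 Complex.ofReal_one).comp
      ((tendsto_cosKernel_atTop _).comp (tendsto_one_div_mul_nhdsGT_zero hN0))
  refine Tendsto.congr' ?_ (by
    simpa using tendsto_finsetSum _ fun k _ =>
      (hlim k).const_mul (cexp (π * I * (k : ℂ) ^ 2 / N) * (1 / N)))
  filter_upwards [self_mem_nhdsWithin] with t ht
  simpa using (sqrt_mul_jacobiTheta_eq_sum hN ht).symm

-- With `τ = 1 / N + i t` we have `-1 / τ = -N + i N t / τ`, so two inversions and an even
-- translation move `τ` to `i τ / (N t)`, which tends to `i ∞` as `t → 0`.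
lemma sqrt_mul_jacobiTheta_eq_mul_jacobiTheta (hN : Even N) {t : ℝ} (ht : 0 < t) :
    √t * jacobiTheta (1 / N + I * t) =
      1 / (-I * (1 / N + I * t)) ^ (1 / 2 : ℂ) * (1 / (N / (1 / N + I * t)) ^ (1 / 2 : ℂ)) *
        jacobiTheta (I * (1 / N + I * t) / (N * t)) := by
  have hN0 : (N : ℂ) ≠ 0 := by exact_mod_cast NeZero.ne N
  have ht0 : (t : ℂ) ≠ 0 := by exact_mod_cast ht.ne'
  have hst : (√t : ℂ) ≠ 0 := by exact_mod_cast (Real.sqrt_pos.mpr ht).ne'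
  have hτ0 : (1 / N + I * t : ℂ) ≠ 0 := fun h => ht.ne' <| by
    rw [← one_div_add_I_mul_im (N := N) t, h, zero_im]
  obtain ⟨a, ha⟩ := hN
  have hN2 : (N : ℂ) = 2 * a := by rw [ha]; push_cast; ring
  set τ : ℂ := 1 / N + I * t with hτ
  have htranslate : jacobiTheta (-1 / τ) = jacobiTheta (t * (I * (N / τ))) := by
    rw [← jacobiTheta_add_two_mul_natCast _ a, ← hN2]
    congr 1
    field_simp
    rw [hτ]
    field_simp
    ring
  have hinv : -1 / (t * (I * (N / τ))) = I * τ / (N * t) := by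
    field_simp
    rw [Complex.I_sq]
  have hrot : -I * (t * (I * (N / τ))) = t * (N / τ) := by
    linear_combination (-(t * (N / τ) : ℂ)) * Complex.I_mul_I
  rw [jacobiTheta_eq_jacobiTheta_neg_one_div τ, htranslate,
    jacobiTheta_eq_jacobiTheta_neg_one_div (t * (I * (N / τ))), hinv, hrot,
    ofReal_mul_cpow_half ht (div_ne_zero hN0 hτ0)]
  field_simp

lemma tendsto_jacobiTheta_cusp :
    Tendsto (fun t : ℝ => jacobiTheta (I * (1 / N + I * t) / (N * t))) (𝓝[>] 0) (𝓝 1) := by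
  have hN0 : (N : ℂ) ≠ 0 := by exact_mod_cast NeZero.ne N
  refine tendsto_jacobiTheta_comap_im_atTop.comp (tendsto_comap_iff.mpr ?_)
  refine (tendsto_one_div_mul_nhdsGT_zero (c := N ^ 2)
    (by have := NeZero.pos N; positivity)).congr' ?_
  filter_upwards [self_mem_nhdsWithin] with t (ht : 0 < t)
  have ht0 : (t : ℂ) ≠ 0 := by exact_mod_cast ht.ne'
  have hform : I * (1 / N + I * t) / (N * t) =
      ((-(1 / N) : ℝ) : ℂ) + ((1 / ((N : ℝ) ^ 2 * t) : ℝ) : ℂ) * I := by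
    push_cast
    field_simp
    ring_nf
    rw [Complex.I_sq]
    ring
  rw [Function.comp_apply, hform, add_im, ofReal_im, im_ofReal_mul, I_im, mul_one, zero_add]

lemma tendsto_sqrt_mul_jacobiTheta (hN : Even N) :
    Tendsto (fun t : ℝ => √t * jacobiTheta (1 / N + I * t)) (𝓝[>] 0)
      (𝓝 (1 / (-I * (1 / N)) ^ (1 / 2 : ℂ) * (1 / (N / (1 / N)) ^ (1 / 2 : ℂ)))) := by
  have hN0 : (N : ℂ) ≠ 0 := by exact_mod_cast NeZero.ne N
  have hτ : Tendsto (fun t : ℝ => (1 / N + I * t : ℂ)) (𝓝[>] 0) (𝓝 (1 / N : ℂ)) :=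
    tendsto_nhdsWithin_of_tendsto_nhds <|
      Continuous.tendsto' (by fun_prop) _ _ (by simp)
  have hslit : -I * (1 / N) ∈ slitPlane := .inr <| by
    simp [← ofReal_natCast, ← ofReal_inv, NeZero.ne N]
  have hslit' : (N / (1 / N) : ℂ) ∈ slitPlane := .inl <| by
    have := NeZero.pos N
    rw [← ofReal_natCast, ← ofReal_one, ← ofReal_div, ← ofReal_div, ofReal_re]
    positivity
  have hcpow {f : ℝ → ℂ} {z : ℂ} (hf : Tendsto f (𝓝[>] 0) (𝓝 z)) (hz : z ∈ slitPlane) :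
      Tendsto (fun t => 1 / f t ^ (1 / 2 : ℂ)) (𝓝[>] 0) (𝓝 (1 / z ^ (1 / 2 : ℂ))) :=
    tendsto_const_nhds.div (hf.cpow tendsto_const_nhds hz)
      (by simp [Complex.cpow_eq_zero_iff, slitPlane_ne_zero hz])
  have hlim := ((hcpow (hτ.const_mul (-I)) hslit).mul
    (hcpow (tendsto_const_nhds.div hτ (one_div_ne_zero hN0)) hslit')).mul
    (tendsto_jacobiTheta_cusp (N := N))
  rw [mul_one] at hlim
  refine hlim.congr' ?_
  filter_upwards [self_mem_nhdsWithin] with t ht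
  exact (sqrt_mul_jacobiTheta_eq_mul_jacobiTheta hN ht).symm

theorem sum_cexp_sq_div_of_even (hN : Even N) :
    ∑ k : Fin N, cexp (π * I * (k : ℂ) ^ 2 / N) = √N * cexp (π * I / 4) := by
  have hNpos : (0 : ℝ) < N := by exact_mod_cast NeZero.pos N
  have hN0 : (N : ℂ) ≠ 0 := by exact_mod_cast NeZero.ne N
  have hphase : (-I : ℂ) ^ (1 / 2 : ℂ) * cexp (π * I / 4) = 1 := by
    rw [Complex.cpow_def_of_ne_zero (neg_ne_zero.mpr I_ne_zero), Complex.log_neg_I,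
      ← Complex.exp_add]
    ring_nf
    exact Complex.exp_zero
  have hleft : (-I * (1 / N) : ℂ) ^ (1 / 2 : ℂ) = (√N)⁻¹ * (-I) ^ (1 / 2 : ℂ) := by
    rw [← Real.sqrt_inv,
      ← ofReal_mul_cpow_half (inv_pos.mpr hNpos) (neg_ne_zero.mpr I_ne_zero)]
    push_cast
    ring_nf
  have hright : (N / (1 / N) : ℂ) ^ (1 / 2 : ℂ) = N := by
    have h := ofReal_mul_cpow_half (mul_pos hNpos hNpos) one_ne_zero
    rw [Real.sqrt_mul_self hNpos.le, one_cpow] at h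
    simpa using h
  have h := tendsto_nhds_unique (tendsto_sqrt_mul_jacobiTheta_sum hN)
    (tendsto_sqrt_mul_jacobiTheta hN)
  rw [← Finset.sum_mul, hleft, hright] at h
  have hI : (-I : ℂ) ^ (1 / 2 : ℂ) ≠ 0 := left_ne_zero_of_mul_eq_one hphase
  rw [eq_div_of_mul_eq hI ((mul_comm _ _).trans hphase)]
  push_cast at h
  field_simp at h ⊢
  exact h

lemma sum_zmod_eq_sum_fin (F : ℕ → ℂ) : ∑ k : ZMod N, F k.val = ∑ k : Fin N, F k := by
  obtain ⟨m, rfl⟩ := Nat.exists_eq_succ_of_ne_zero (NeZero.ne N)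
  rfl

omit [NeZero N] in
lemma card_ker_zmod_castHom {M : ℕ} [NeZero M] {d : ℕ} (hM : M = d * N) (hdvd : N ∣ M) :
    Nat.card (ZMod.castHom hdvd (ZMod N) : ZMod M →+ ZMod N).ker = d := by
  have hN : 0 < N := Nat.pos_of_dvd_of_pos hdvd (NeZero.pos M)
  have h := (ZMod.castHom hdvd (ZMod N) :
    ZMod M →+ ZMod N).ker.card_eq_card_quotient_mul_card_addSubgroup
  rw [Nat.card_congr (QuotientAddGroup.quotientKerEquivOfSurjective _
    (ZMod.castHom_surjective hdvd)).toEquiv, Nat.card_zmod, Nat.card_zmod] at h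
  exact Nat.eq_of_mul_eq_mul_left hN (by linarith)

lemma stdAddChar_natCast_mul_sq (hN : Even N) {A M : ℕ} [NeZero M] (hM : M = 2 * A * N)
    (hdvd : N ∣ M) (k : ZMod M) : ZMod.stdAddChar (A * k ^ 2 : ZMod M) =
      cexp (π * I * (((ZMod.castHom hdvd (ZMod N) k).val : ℕ) : ℂ) ^ 2 / N) := by
  have hA0 : (A : ℂ) ≠ 0 := fun h => NeZero.ne M (by simp [hM, Nat.cast_eq_zero.mp h])
  have hN0 : (N : ℂ) ≠ 0 := by exact_mod_cast NeZero.ne N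
  obtain ⟨j, rfl⟩ := ZMod.intCast_surjective k
  have hval : ((((j : ℤ) : ZMod N).val : ℕ) : ℂ) = ((j % N : ℤ) : ℂ) := by
    rw [← ZMod.val_intCast j]; push_cast; rfl
  have hperiod := cexp_sq_div_mul_add hN (j % N) (j / N)
  rw [Int.ediv_mul_add_emod] at hperiod
  rw [map_intCast, hval, ← hperiod, show (A * j ^ 2 : ZMod M) = ((A * j ^ 2 : ℤ) : ZMod M) by
    push_cast; rfl, ZMod.stdAddChar_coe, hM]
  congr 1
  push_cast
  field_simp

lemma sum_stdAddChar_natCast_mul_sq (hN : Even N) {A M : ℕ} [NeZero M] (hM : M = 2 * A * N) :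
    ∑ k : ZMod M, ZMod.stdAddChar (A * k ^ 2 : ZMod M) = 2 * A * √N * cexp (π * I / 4) := by
  classical
  have hdvd : N ∣ M := ⟨2 * A, by rw [hM, mul_comm]⟩
  have hrange : (ZMod.castHom hdvd (ZMod N) : ZMod M →+ ZMod N).range = ⊤ :=
    AddMonoidHom.range_eq_top.mpr (ZMod.castHom_surjective hdvd)
  have h := sum_comp_eq_card_ker_mul_sum_range (ZMod.castHom hdvd (ZMod N) : ZMod M →+ ZMod N)
    fun k => cexp (π * I * ((k.val : ℕ) : ℂ) ^ 2 / N)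
  simp only [hrange, AddSubgroup.mem_top, Finset.filter_true, card_ker_zmod_castHom hM,
    AddMonoidHom.coe_coe] at h
  rw [sum_zmod_eq_sum_fin fun k => cexp (π * I * (k : ℂ) ^ 2 / N), sum_cexp_sq_div_of_even hN] at h
  push_cast at h
  simpa only [stdAddChar_natCast_mul_sq hN hM hdvd, mul_assoc] using h

theorem sum_stdAddChar_intCast_mul_sq {a : ℤ} (ha : a ≠ 0) (hN : 2 * a ∣ N) :
    ∑ k : ZMod (N ^ 2), ZMod.stdAddChar (a * k ^ 2 : ZMod (N ^ 2)) =
      N * √(2 * |a|) * cexp (a.sign * (π * I / 4)) := by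
  obtain ⟨s, hs⟩ : 2 * a.natAbs ∣ N := by
    simpa [Int.natAbs_mul] using Int.natAbs_dvd_natAbs.mpr hN
  have hs0 : s ≠ 0 := by rintro rfl; exact NeZero.ne N hs
  have : NeZero (2 * a.natAbs * s ^ 2) := ⟨by have := Int.natAbs_ne_zero.mpr ha; positivity⟩
  have hsum := sum_stdAddChar_natCast_mul_sq (N := 2 * a.natAbs * s ^ 2) (A := a.natAbs)
    (M := N ^ 2) ⟨a.natAbs * s ^ 2, by ring⟩ (by rw [hs]; ring)
  have hsqrt : (2 * a.natAbs * √(2 * a.natAbs * s ^ 2 : ℕ) : ℝ) = N * √(2 * |a|) := by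
    rw [← Int.natCast_natAbs, Int.cast_natCast, hs, Nat.cast_mul _ (s ^ 2), Nat.cast_pow,
      Real.sqrt_mul (by positivity), Real.sqrt_sq (by positivity)]
    push_cast
    ring
  rw [show (2 * a.natAbs * √(2 * a.natAbs * s ^ 2 : ℕ) : ℂ) = N * √(2 * |a|) by
    exact_mod_cast hsqrt] at hsum
  rcases lt_or_gt_of_ne ha with hneg | hpos
  · have hcast : (a : ZMod (N ^ 2)) = -(a.natAbs : ZMod (N ^ 2)) := by
      rw [← Int.cast_natCast, Int.ofNat_natAbs_of_nonpos hneg.le, Int.cast_neg, neg_neg]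
    simp_rw [hcast, neg_mul, AddChar.map_neg_eq_conj, ← map_sum, hsum,
      Int.sign_eq_neg_one_of_neg hneg]
    simp [← Complex.exp_conj, neg_div, map_ofNat]
  · have hcast : (a : ZMod (N ^ 2)) = (a.natAbs : ZMod (N ^ 2)) := by
      rw [← Int.cast_natCast, Int.natAbs_of_nonneg hpos.le]
    simp_rw [hcast, hsum, Int.sign_eq_one_of_pos hpos]
    simp

end GaussSumPhase

section TraceGaussSums

open Finset

variable {O : Type*} [CommRing O]

/-- The quotient `O / M O` by a natural number `M`. -/
abbrev NatQuot (O : Type*) [CommRing O] (M : ℕ) : Type _ := O ⧸ Ideal.span {(M : O)}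

namespace NatQuot

/-- The reduction map `O → O / M O`. -/
abbrev reduce (M : ℕ) : O →+* NatQuot O M := Ideal.Quotient.mk _

lemma reduce_surjective {M : ℕ} : Function.Surjective (reduce M : O →+* NatQuot O M) :=
  Ideal.Quotient.mk_surjective

lemma reduce_eq_zero_iff {M : ℕ} {x : O} : reduce M x = 0 ↔ (M : O) ∣ x := by
  rw [Ideal.Quotient.eq_zero_iff_mem, Ideal.mem_span_singleton]

lemma natCast_self (M : ℕ) : (M : NatQuot O M) = 0 := by
  rw [← map_natCast (reduce (O := O) M), reduce_eq_zero_iff]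

instance [Module.Finite ℤ O] (M : ℕ) [NeZero M] : Finite (NatQuot O M) := by
  have : Module.Finite ℤ (NatQuot O M) :=
    .of_surjective (reduce M : O →+* NatQuot O M).toIntAlgHom.toLinearMap reduce_surjective
  refine Module.finite_of_fg_torsion _ fun {x} => ?_
  refine ⟨⟨M, mem_nonZeroDivisors_of_ne_zero (Nat.cast_ne_zero.mpr (NeZero.ne M))⟩, ?_⟩
  rw [Submonoid.mk_smul, zsmul_eq_mul, Int.cast_natCast, natCast_self, zero_mul]

noncomputable instance [Module.Finite ℤ O] (M : ℕ) [NeZero M] : Fintype (NatQuot O M) :=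
  Fintype.ofFinite _

/-- The Chinese remainder isomorphism `O / A B ≃ O / A × O / B`. -/
noncomputable def equivProd {A B : ℕ} (h : A.Coprime B) :
    NatQuot O (A * B) ≃+* NatQuot O A × NatQuot O B :=
  (Ideal.quotEquivOfEq
    (by rw [Ideal.span_singleton_mul_span_singleton, Nat.cast_mul])).trans
    (Ideal.quotientMulEquivQuotientProd (Ideal.span {(A : O)}) (Ideal.span {(B : O)})
      ((Ideal.isCoprime_span_singleton_iff _ _).mpr (by
        simpa using (Nat.isCoprime_iff_coprime.mpr h).map (Int.castRingHom O))))

lemma equivProd_reduce {A B : ℕ} (h : A.Coprime B) (x : O) :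
    equivProd h (reduce (A * B) x) = (reduce A x, reduce B x) := rfl

/-- The reduction modulo `M` of `k ↦ ∑ i, k i • v i`. -/
noncomputable def combination {ι : Type*} [Fintype ι] (M : ℕ) (v : ι → O) :
    (ι → ZMod M) →+ NatQuot O M :=
  letI : Module (ZMod M) (NatQuot O M) := AddCommGroup.zmodModule fun x => by
    rw [nsmul_eq_mul, natCast_self, zero_mul]
  (Fintype.linearCombination (ZMod M) fun i => reduce M (v i)).toAddMonoidHom

lemma combination_intCast {ι : Type*} [Fintype ι] (M : ℕ) (v : ι → O) (k : ι → ℤ) :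
    combination M v (fun i => (k i : ZMod M)) = reduce M (∑ i, k i • v i) := by
  rw [map_sum]
  refine sum_congr rfl fun i _ => ?_
  let _ : Module (ZMod M) (NatQuot O M) := AddCommGroup.zmodModule fun x => by
    rw [nsmul_eq_mul, natCast_self, zero_mul]
  exact (Int.cast_smul_eq_zsmul (ZMod M) (k i) (reduce M (v i))).trans
    (map_zsmul (reduce M) _ _).symm

end NatQuot

open NatQuot

/-- The additive character `x ↦ exp (2πi τ(x) / M)` of `O / M O` attached to an additive map
`τ : O → ℤ`. -/
noncomputable def traceChar (τ : O →+ ℤ) (M : ℕ) [NeZero M] : AddChar (NatQuot O M) ℂ :=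
  (ZMod.stdAddChar (N := M)).compAddMonoidHom <|
    QuotientAddGroup.lift (Ideal.span {(M : O)}).toAddSubgroup
      ((Int.castAddHom (ZMod M)).comp τ) fun x hx => by
        obtain ⟨y, rfl⟩ := Ideal.mem_span_singleton.mp hx
        rw [AddMonoidHom.mem_ker, AddMonoidHom.comp_apply, ← nsmul_eq_mul, map_nsmul]
        simp

lemma traceChar_reduce (τ : O →+ ℤ) (M : ℕ) [NeZero M] (x : O) :
    traceChar τ M (reduce M x) = ZMod.stdAddChar (τ x : ZMod M) := rfl

lemma traceChar_reduce_eq_one_iff (τ : O →+ ℤ) (M : ℕ) [NeZero M] (x : O) :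
    traceChar τ M (reduce M x) = 1 ↔ (M : ℤ) ∣ τ x := by
  rw [traceChar_reduce, ← (ZMod.stdAddChar (N := M)).map_zero_eq_one,
    ZMod.injective_stdAddChar.eq_iff, ZMod.intCast_zmod_eq_zero_iff_dvd]

lemma stdAddChar_mul_eq_of_bezout {A B : ℕ} [NeZero A] [NeZero B] [NeZero (A * B)] {r s : ℤ}
    (h : r * B + s * A = 1) (j : ℤ) :
    ZMod.stdAddChar (j : ZMod (A * B)) =
      ZMod.stdAddChar ((r * j : ℤ) : ZMod A) * ZMod.stdAddChar ((s * j : ℤ) : ZMod B) := by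
  have hA : (A : ℂ) ≠ 0 := NeZero.ne _
  have hB : (B : ℂ) ≠ 0 := NeZero.ne _
  have hc : (r : ℂ) * B + s * A = 1 := mod_cast h
  rw [ZMod.stdAddChar_coe, ZMod.stdAddChar_coe, ZMod.stdAddChar_coe, ← Complex.exp_add]
  congr 1
  push_cast
  field_simp
  linear_combination -(j : ℂ) * hc

lemma traceChar_mul_reduce_of_bezout (τ : O →+ ℤ) {A B : ℕ} [NeZero A] [NeZero B] [NeZero (A * B)]
    {r s : ℤ} (h : r * B + s * A = 1) (x : O) :
    traceChar τ (A * B) (reduce (A * B) x) =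
      traceChar τ A (r * reduce A x) * traceChar τ B (s * reduce B x) := by
  simp only [← zsmul_eq_mul, ← map_zsmul]
  rw [traceChar_reduce, traceChar_reduce, traceChar_reduce, map_zsmul, map_zsmul,
    smul_eq_mul, smul_eq_mul, stdAddChar_mul_eq_of_bezout h]

variable [Module.Finite ℤ O]

/-- The quadratic Gauss sum of `u` modulo `M`, formed with the character `traceChar τ M`. -/
noncomputable def traceGaussSum (τ : O →+ ℤ) (M : ℕ) [NeZero M] (u : O) : ℂ :=
  quadGaussSum (traceChar τ M) (reduce M u)

lemma quadGaussSum_inv_sq_mul (τ : O →+ ℤ) {M b : ℕ} [NeZero M] {r s : ℤ}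
    (h : r * b ^ 2 + s * M = 1) (u : O) :
    quadGaussSum (traceChar τ M) (r * reduce M u) = traceGaussSum τ M u := by
  have hcast := congrArg (Int.cast : ℤ → NatQuot O M) h
  push_cast [natCast_self] at hcast
  have hb : (b : NatQuot O M) * (r * b) = 1 := by linear_combination hcast
  rw [traceGaussSum, ← quadGaussSum_mul_sq _ (r * reduce M u) (Units.mkOfMulEqOne _ _ hb),
    Units.val_mkOfMulEqOne]
  congr 1
  linear_combination reduce M u * hcast

theorem traceGaussSum_mul (τ : O →+ ℤ) {A B : ℕ} [NeZero A] [NeZero B] [NeZero (A * B)]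
    (hA : IsSquare A) (hB : IsSquare B) (h : A.Coprime B) (u : O) :
    traceGaussSum τ (A * B) u = traceGaussSum τ A u * traceGaussSum τ B u := by
  obtain ⟨a, rfl⟩ := hA
  obtain ⟨b, rfl⟩ := hB
  obtain ⟨s, r, hsr⟩ := Nat.isCoprime_iff_coprime.mpr h
  push_cast at hsr
  rw [← quadGaussSum_inv_sq_mul τ (M := a * a) (b := b) (r := r) (s := s)
      (by push_cast; linear_combination hsr),
    ← quadGaussSum_inv_sq_mul τ (M := b * b) (b := a) (r := s) (s := r)
      (by push_cast; linear_combination hsr),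
    traceGaussSum, quadGaussSum, quadGaussSum, quadGaussSum, sum_mul_sum, ← sum_product',
    univ_product_univ, ← Equiv.sum_comp (equivProd h).toEquiv]
  refine sum_congr rfl fun x _ => ?_
  obtain ⟨x, rfl⟩ := reduce_surjective x
  rw [RingEquiv.toEquiv_eq_coe, RingEquiv.coe_toEquiv, equivProd_reduce]
  simp only [mul_assoc, ← map_pow, ← map_mul]
  exact traceChar_mul_reduce_of_bezout τ (by push_cast; linear_combination hsr) _

/-- The averaging is over translation by the multiples `c • Φ b`. -/
lemma sum_quadratic_comp {R B : Type*} [CommRing R] [Fintype R] [AddCommGroup B] [Fintype B]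
    (ψ : AddChar R ℂ) (Φ : B →+ R) {u : R} {c : ℕ} (hc : ∀ b, u * (c * Φ b) ^ 2 = 0)
    (hΦ : ∀ x, (∀ b, ψ (2 * c * (u * x * Φ b)) = 1) → x ∈ Φ.range) :
    ∑ b, ψ (u * Φ b ^ 2) = Nat.card Φ.ker * quadGaussSum ψ u := by
  refine sum_comp_eq_card_ker_mul_sum (F := fun x => ψ (u * x ^ 2)) (s := fun b => c • Φ b)
    (ζ := fun x => (ψ.mulShift (2 * c * (u * x))).compAddMonoidHom Φ) (fun x b => ?_)
    (fun b => ⟨c • b, map_nsmul Φ c b⟩) fun x hx => hΦ x fun b => ?_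
  · rw [AddChar.compAddMonoidHom_apply, AddChar.mulShift_apply, ← AddChar.map_add_eq_mul]
    congr 1
    rw [nsmul_eq_mul]
    linear_combination hc b
  · simpa [AddChar.mulShift_apply, mul_assoc] using DFunLike.congr_fun hx b

lemma sum_traceChar_four_mul_sq (τ : O →+ ℤ) {M L : ℕ} [NeZero M] [NeZero L] (hM : M = 4 * L)
    (u : O) : ∃ r : ℝ, 0 < r ∧
      ∑ x : NatQuot O M, traceChar τ M (reduce M u * (2 * x) ^ 2) = r * traceGaussSum τ L u := by
  classical
  have hML : Ideal.span {(M : O)} ≤ Ideal.span {(L : O)} := by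
    rw [Ideal.span_singleton_le_span_singleton, hM, Nat.cast_mul]
    exact dvd_mul_left _ _
  let π : NatQuot O M →+* NatQuot O L := Ideal.Quotient.factor hML
  have hπ : (π : NatQuot O M →+ NatQuot O L).range = ⊤ :=
    AddMonoidHom.range_eq_top.mpr (Ideal.Quotient.factor_surjective hML)
  have hL : (L : ℂ) ≠ 0 := NeZero.ne _
  refine ⟨Nat.card (π : NatQuot O M →+ NatQuot O L).ker, Nat.cast_pos.mpr Nat.card_pos, ?_⟩
  calc ∑ x : NatQuot O M, traceChar τ M (reduce M u * (2 * x) ^ 2)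
      = ∑ x : NatQuot O M, traceChar τ L (reduce L u * (π : NatQuot O M →+ NatQuot O L) x ^ 2) := by
        refine sum_congr rfl fun x _ => ?_
        obtain ⟨x, rfl⟩ := reduce_surjective x
        have hfour : reduce M u * (2 * reduce M x) ^ 2 = reduce M (4 • (u * x ^ 2)) := by
          simp only [nsmul_eq_mul, map_mul, map_pow, Nat.cast_ofNat, map_ofNat]
          ring
        rw [hfour]
        change _ = traceChar τ L (reduce L u * (reduce L x) ^ 2)
        rw [← map_pow, ← map_mul, traceChar_reduce, traceChar_reduce, ZMod.stdAddChar_coe,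
          ZMod.stdAddChar_coe, map_nsmul, nsmul_eq_mul, hM]
        congr 1
        push_cast
        field_simp
    _ = _ := by
        rw [sum_comp_eq_card_ker_mul_sum_range _ fun y => traceChar τ L (reduce L u * y ^ 2)]
        simp [hπ, traceGaussSum, quadGaussSum]

/-- Pairing with `2 L x` detects whether `x` is divisible by `2`, so that the Gauss sum modulo
`4 L` is supported on the multiples of `2`. -/
theorem exists_traceGaussSum_four_mul (τ : O →+ ℤ) (hτ : ∀ x, (∀ y, 2 ∣ τ (x * y)) → 2 ∣ x)
    {M L : ℕ} [NeZero M] [NeZero L] (hM : M = 4 * L) (hL : 4 ∣ L) (u : Oˣ) :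
    ∃ r : ℝ, 0 < r ∧ traceGaussSum τ M u = r * traceGaussSum τ L u := by
  obtain ⟨l, hl⟩ := hL
  obtain ⟨r, hr, hsum⟩ := sum_traceChar_four_mul_sq τ hM (u : O)
  have hM0 : (16 * l : NatQuot O M) = 0 := by
    have h := congrArg (Nat.cast : ℕ → NatQuot O M) (hM.trans (by rw [hl, ← mul_assoc]))
    push_cast [natCast_self] at h
    linear_combination -h
  have hlocal := sum_quadratic_comp (traceChar τ M) (AddMonoidHom.mulLeft 2) (u := reduce M (u : O))
    (c := 2 * l) (fun b => ?_) fun x hx => ?_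
  · rw [AddMonoidHom.coe_mulLeft, hsum] at hlocal
    have hker : 0 < Nat.card (AddMonoidHom.mulLeft (2 : NatQuot O M)).ker := Nat.card_pos
    refine ⟨r / Nat.card (AddMonoidHom.mulLeft (2 : NatQuot O M)).ker, by positivity, ?_⟩
    rw [traceGaussSum, Complex.ofReal_div, Complex.ofReal_natCast, div_mul_eq_mul_div,
      eq_div_iff (Nat.cast_ne_zero.mpr hker.ne'), hlocal, mul_comm]
  · rw [AddMonoidHom.coe_mulLeft]
    push_cast
    linear_combination reduce M (u : O) * b ^ 2 * l * hM0
  · obtain ⟨x, rfl⟩ := reduce_surjective x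
    obtain ⟨z, hz⟩ := hτ (u * x) fun y => by
      have hxy : 2 * ((2 * l : ℕ) : NatQuot O M) *
          (reduce M (u : O) * reduce M x * (2 * reduce M y)) =
            reduce M ((2 * L) • (u * x * y)) := by
        simp only [hl, nsmul_eq_mul, map_mul, map_natCast]
        push_cast
        ring
      have hy := hx (reduce M y)
      rw [AddMonoidHom.coe_mulLeft, hxy, traceChar_reduce_eq_one_iff, map_nsmul, hM,
        nsmul_eq_mul] at hy
      refine Int.dvd_of_mul_dvd_mul_left (mul_ne_zero two_ne_zero (NeZero.ne (L : ℤ))) ?_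
      convert hy using 1 <;> push_cast <;> ring
    refine ⟨reduce M (↑u⁻¹ * z), ?_⟩
    rw [AddMonoidHom.coe_mulLeft, ← map_ofNat (reduce M), ← map_mul]
    congr 1
    linear_combination x * u.inv_mul - ↑u⁻¹ * hz

theorem exists_traceGaussSum_four_pow (τ : O →+ ℤ) (hτ : ∀ x, (∀ y, 2 ∣ τ (x * y)) → 2 ∣ x)
    (k : ℕ) (u : Oˣ) :
    ∃ r : ℝ, 0 < r ∧ traceGaussSum τ (4 ^ (k + 1)) u = r * traceGaussSum τ 4 u := by
  induction k with
  | zero => exact ⟨1, one_pos, by simp⟩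
  | succ k ih =>
    obtain ⟨r, hr, h⟩ := ih
    obtain ⟨s, hs, h'⟩ := exists_traceGaussSum_four_mul τ hτ (pow_succ' 4 (k + 1))
      (dvd_pow_self 4 k.succ_ne_zero) u
    exact ⟨s * r, mul_pos hs hr, by rw [h', h, Complex.ofReal_mul, mul_assoc]⟩

/-- A family `v` diagonalising the form `x ↦ τ (ε x²)`, with nonzero diagonal entries, such that
every `x` whose orthogonal projections are integral multiples of the `v i` lies in their span. -/
structure IsOrthogonalFrame {ι : Type*} (τ : O →+ ℤ) (ε : O) (v : ι → O) : Prop where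
  apply_eq_zero : ∀ i j, i ≠ j → τ (ε * (v i * v j)) = 0
  apply_ne_zero : ∀ i, τ (ε * v i ^ 2) ≠ 0
  mem_span : ∀ x, (∀ i, τ (ε * v i ^ 2) ∣ τ (ε * v i * x)) → x ∈ Submodule.span ℤ (Set.range v)

namespace IsOrthogonalFrame

variable {ι : Type*} [Fintype ι] {τ : O →+ ℤ} {ε : O} {v : ι → O}

omit [Module.Finite ℤ O] in
lemma apply_sum_sq (h : IsOrthogonalFrame τ ε v) (k : ι → ℤ) :
    τ (ε * (∑ i, k i • v i) ^ 2) = ∑ i, τ (ε * v i ^ 2) * k i ^ 2 := by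
  have hexpand : ε * (∑ i, k i • v i) ^ 2 = ∑ i, ∑ j, (k i * k j) • (ε * (v i * v j)) := by
    rw [pow_two, sum_mul_sum, mul_sum]
    refine sum_congr rfl fun i _ => ?_
    rw [mul_sum]
    refine sum_congr rfl fun j _ => ?_
    simp only [zsmul_eq_mul]
    push_cast
    ring
  rw [hexpand, map_sum]
  refine sum_congr rfl fun i _ => ?_
  rw [map_sum, sum_eq_single i, map_zsmul, ← pow_two, ← pow_two, smul_eq_mul, mul_comm]
  · intro j _ hji
    rw [map_zsmul, h.apply_eq_zero i j hji.symm, smul_zero]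
  · simp

omit [Module.Finite ℤ O] in
lemma traceChar_combination (h : IsOrthogonalFrame τ ε v) (M : ℕ) [NeZero M] (k : ι → ZMod M) :
    traceChar τ M (reduce M ε * combination M v k ^ 2) =
      ∏ i, ZMod.stdAddChar ((τ (ε * v i ^ 2) : ZMod M) * k i ^ 2) := by
  choose j hj using fun i => ZMod.intCast_surjective (k i)
  obtain rfl : (fun i => (j i : ZMod M)) = k := funext hj
  rw [combination_intCast, ← map_pow, ← map_mul, traceChar_reduce, h.apply_sum_sq, Int.cast_sum,
    addChar_sum_eq_prod]
  push_cast
  rfl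

lemma card_ker_mul_traceGaussSum [DecidableEq ι] (h : IsOrthogonalFrame τ ε v) {N : ℕ}
    [NeZero N] (hN : ∀ i, 2 * τ (ε * v i ^ 2) ∣ N) :
    Nat.card (combination (N ^ 2) v).ker * traceGaussSum τ (N ^ 2) ε =
      ∑ k, traceChar τ (N ^ 2) (reduce (N ^ 2) ε * combination (N ^ 2) v k ^ 2) := by
  refine (sum_quadratic_comp (c := N) _ _ (fun k => ?_) fun x hx => ?_).symm
  · rw [mul_pow, ← Nat.cast_pow, natCast_self, zero_mul, mul_zero]
  obtain ⟨x, rfl⟩ := reduce_surjective x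
  have hdvd (i : ι) : τ (ε * v i ^ 2) ∣ τ (ε * v i * x) := by
    have hxv : 2 * (N : NatQuot O (N ^ 2)) * (reduce _ ε * reduce _ x * reduce _ (v i)) =
        reduce (N ^ 2) ((2 * N) • (ε * v i * x)) := by
      simp only [nsmul_eq_mul, map_mul, map_natCast]
      push_cast
      ring
    have hi := hx fun j => ((Pi.single i 1 : ι → ℤ) j : ZMod (N ^ 2))
    rw [combination_intCast, sum_eq_single i (by simp +contextual) (by simp),
      Pi.single_eq_same, one_smul, hxv, traceChar_reduce_eq_one_iff, map_nsmul,
      nsmul_eq_mul] at hi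
    have h2 : (N : ℤ) ∣ 2 * τ (ε * v i * x) := by
      refine Int.dvd_of_mul_dvd_mul_left (NeZero.ne (N : ℤ)) ?_
      convert hi using 1 <;> push_cast <;> ring
    exact Int.dvd_of_mul_dvd_mul_left two_ne_zero ((hN i).trans h2)
  obtain ⟨b, hb⟩ := (Submodule.mem_span_range_iff_exists_fun ℤ).mp (h.mem_span x hdvd)
  exact ⟨_, (combination_intCast _ v b).trans (congrArg _ hb)⟩

theorem exists_traceGaussSum_sq_eq (h : IsOrthogonalFrame τ ε v) {N : ℕ} [NeZero N]
    (hN : ∀ i, 2 * τ (ε * v i ^ 2) ∣ N) : ∃ r : ℝ, 0 < r ∧ traceGaussSum τ (N ^ 2) ε =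
      r * Complex.exp ((∑ i, (τ (ε * v i ^ 2)).sign : ℤ) * (Real.pi * Complex.I / 4)) := by
  classical
  have hcard : (0 : ℝ) < Nat.card (combination (N ^ 2) v).ker := Nat.cast_pos.mpr Nat.card_pos
  have hN0 : (0 : ℝ) < N := Nat.cast_pos.mpr (NeZero.pos N)
  refine ⟨(∏ i, N * √(2 * |τ (ε * v i ^ 2)|)) / Nat.card (combination (N ^ 2) v).ker,
    div_pos (prod_pos fun i _ => ?_) hcard, ?_⟩
  · have := abs_pos.mpr (h.apply_ne_zero i)
    positivity
  have hsum := h.card_ker_mul_traceGaussSum hN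
  simp_rw [h.traceChar_combination] at hsum
  rw [← Fintype.piFinset_univ, ← prod_univ_sum (fun _ => univ) fun i (x : ZMod (N ^ 2)) =>
    ZMod.stdAddChar ((τ (ε * v i ^ 2) : ZMod (N ^ 2)) * x ^ 2)] at hsum
  simp_rw [fun i => sum_stdAddChar_intCast_mul_sq (h.apply_ne_zero i) (hN i)] at hsum
  rw [prod_mul_distrib, ← Complex.exp_sum, ← sum_mul] at hsum
  rw [Complex.ofReal_div, Complex.ofReal_prod, Complex.ofReal_natCast, div_mul_eq_mul_div,
    eq_div_iff (mod_cast hcard.ne'), mul_comm]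
  simpa using hsum

end IsOrthogonalFrame

end TraceGaussSums

section Signature

open QuadraticForm

section Orthogonal

variable {R M ι : Type*} [AddCommGroup M]

lemma apply_basis_eq_repr_mul [Finite ι] [CommRing R] [Module R M] {B : LinearMap.BilinForm R M}
    {b : Module.Basis ι R M} (hb : B.IsOrthoᵢ b) (i : ι) (x : M) :
    B (b i) x = b.repr x i * B (b i) (b i) := by
  let _ := Fintype.ofFinite ι
  conv_lhs => rw [← b.sum_repr x, map_sum]
  rw [Finset.sum_eq_single i (fun j _ hji => ?_) (by simp), map_smul, smul_eq_mul]
  rw [map_smul, show B (b i) (b j) = 0 from hb hji.symm, smul_zero]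

lemma toQuadraticMap_equivalent_weightedSumSquares [Fintype ι] [CommRing R]
    [Module R M] [Invertible (2 : R)] {B : LinearMap.BilinForm R M} {b : Module.Basis ι R M}
    (hb : B.IsOrthoᵢ b) :
    B.toQuadraticMap.Equivalent
      (QuadraticMap.weightedSumSquares R fun i => B (b i) (b i)) := by
  have hortho : (QuadraticMap.associated (R := R) B.toQuadraticMap).IsOrthoᵢ b := by
    intro i j hij
    simp [Function.onFun, QuadraticMap.associated_toQuadraticMap,
      show B (b i) (b j) = 0 from hb hij, show B (b j) (b i) = 0 from hb hij.symm]
  have e := B.toQuadraticMap.isometryEquivBasisRepr b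
  rw [QuadraticMap.basisRepr_eq_of_iIsOrtho _ _ hortho] at e
  exact ⟨e⟩

lemma sum_sign_eq_sigPos_sub_sigNeg [Fintype ι] [Field R] [LinearOrder R]
    [IsStrictOrderedRing R] [Module R M] {B : LinearMap.BilinForm R M} {b : Module.Basis ι R M}
    (hb : B.IsOrthoᵢ b) :
    ∑ i, (SignType.sign (B (b i) (b i)) : ℤ) =
      sigPos B.toQuadraticMap - sigNeg B.toQuadraticMap := by
  classical
  let _ : Invertible (2 : R) := invertibleOfNonzero two_ne_zero
  have hequiv := toQuadraticMap_equivalent_weightedSumSquares hb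
  have hsign (x : R) : (SignType.sign x : ℤ) =
      (if 0 < x then 1 else 0) - if x < 0 then 1 else 0 := by
    rcases lt_trichotomy x 0 with h | h | h <;> simp [h, h.not_gt]
  rw [sigPos_of_equiv_weightedSumSquares hequiv, sigNeg_of_equiv_weightedSumSquares hequiv,
    Set.ncard_eq_toFinset_card', Set.ncard_eq_toFinset_card']
  simp [hsign, Finset.sum_sub_distrib]

end Orthogonal

section MulForm

variable {R A : Type*} [CommRing R] [CommRing A] [Algebra R A]

/-- The bilinear form `(x, y) ↦ g (z x y)` on a commutative algebra. -/
noncomputable def mulForm (g : A →ₗ[R] R) (z : A) : LinearMap.BilinForm R A :=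
  (LinearMap.mul R A).compr₂ (g ∘ₗ LinearMap.mulLeft R z)

lemma mulForm_apply (g : A →ₗ[R] R) (z x y : A) : mulForm g z x y = g (z * (x * y)) := rfl

lemma mulForm_isSymm (g : A →ₗ[R] R) (z : A) : LinearMap.IsSymm (mulForm g z) :=
  ⟨fun x y => by simp only [mulForm_apply, RingHom.id_apply, mul_comm x y]⟩

lemma mulForm_sq_equivalent_mulForm_one (g : A →ₗ[R] R) {s : A} (hs : IsUnit s) :
    (mulForm g (s ^ 2)).toQuadraticMap.Equivalent (mulForm g 1).toQuadraticMap := by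
  obtain ⟨s, rfl⟩ := hs
  refine ⟨⟨DistribMulAction.toLinearEquiv R A s, fun x => congrArg g ?_⟩⟩
  change 1 * (s * x * (s * x)) = s ^ 2 * (x * x)
  ring

lemma mulForm_separatingLeft {L : Type*} [Field L] [Algebra R L] {f : L →ₗ[R] R} (hf : f ≠ 0)
    {z : L} (hz : z ≠ 0) : (mulForm f z).SeparatingLeft := by
  intro x hx
  by_contra hx0
  refine hf (LinearMap.ext fun y => ?_)
  have := hx ((z * x)⁻¹ * y)
  rwa [mulForm_apply, ← mul_assoc, mul_inv_cancel_left₀ (mul_ne_zero hz hx0)] at this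

end MulForm

section SquareRoots

lemma isSquare_of_forall_isSquare_mk {A : Type*} [CommRing A] [IsArtinianRing A] [IsReduced A]
    {a : A} (h : ∀ m : MaximalSpectrum A, IsSquare (Ideal.Quotient.mk m.asIdeal a)) :
    IsSquare a := by
  choose t ht using h
  refine ⟨(IsArtinianRing.equivPi A).symm t, ?_⟩
  rw [← map_mul, ← (IsArtinianRing.equivPi A).symm_apply_apply a]
  exact congrArg _ (funext ht)

lemma isSquare_of_forall_ringHom_nonneg {F : Type*} [Field F] [Algebra ℝ F]
    [Algebra.IsAlgebraic ℝ F] {x : F} (hx : ∀ φ : F →+* ℝ, 0 ≤ φ x) : IsSquare x := by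
  rcases Real.nonempty_algEquiv_or F with ⟨⟨e⟩⟩ | ⟨⟨e⟩⟩
  · have := (Real.isSquare_iff.mpr (hx e)).map e.symm
    simpa using this
  · have hsq : IsSquare (e x) := IsAlgClosed.exists_eq_mul_self (e x)
    simpa using hsq.map e.symm

variable {K}

lemma isSquare_one_tmul {x : K} (hx : ∀ φ : K →+* ℝ, 0 ≤ φ x) :
    IsSquare (1 ⊗ₜ x : ℝ ⊗[ℚ] K) := by
  have := Algebra.FormallyUnramified.of_isSeparable ℚ K
  have : IsReduced (ℝ ⊗[ℚ] K) := Algebra.FormallyUnramified.isReduced_of_field ℝ _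
  have : IsArtinianRing (ℝ ⊗[ℚ] K) := .of_finite ℝ _
  refine isSquare_of_forall_isSquare_mk fun m => ?_
  let _ : Field ((ℝ ⊗[ℚ] K) ⧸ m.asIdeal) :=
    @Ideal.Quotient.field _ _ m.asIdeal m.isMaximal
  exact isSquare_of_forall_ringHom_nonneg fun φ => hx <| (φ.comp (Ideal.Quotient.mk m.asIdeal)).comp
    (Algebra.TensorProduct.includeRight : K →ₐ[ℚ] ℝ ⊗[ℚ] K).toRingHom

end SquareRoots

section RealForm

variable {K}

/-- The `ℝ`-linear extension to `ℝ ⊗ K` of a `ℚ`-linear functional on `K`. -/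
noncomputable def realExtension (f : K →ₗ[ℚ] ℚ) : (ℝ ⊗[ℚ] K) →ₗ[ℝ] ℝ :=
  (TensorProduct.AlgebraTensorModule.rid ℚ ℝ ℝ).toLinearMap ∘ₗ f.baseChange ℝ

lemma mulForm_realExtension_tmul (f : K →ₗ[ℚ] ℚ) (z x y : K) :
    mulForm (realExtension f) (1 ⊗ₜ z) (1 ⊗ₜ x) (1 ⊗ₜ y) = mulForm f z x y := by
  simp [mulForm_apply, realExtension, Rat.smul_def]

/-- The signature of the real quadratic form `x ↦ f (x²)` on `ℝ ⊗ K`. -/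
noncomputable def traceSignature (f : K →ₗ[ℚ] ℚ) : ℤ :=
  sigPos (mulForm (realExtension f) 1).toQuadraticMap -
    sigNeg (mulForm (realExtension f) 1).toQuadraticMap

/-- A totally positive `ε` is a square in `ℝ ⊗ K`, hence does not change the signature. -/
lemma sum_sign_mulForm_eq_traceSignature (f : K →ₗ[ℚ] ℚ) {ε : K} (hε0 : ε ≠ 0)
    (hε : ∀ φ : K →+* ℝ, 0 ≤ φ ε) {ι : Type*} [Fintype ι] {b : Module.Basis ι ℚ K}
    (hb : (mulForm f ε).IsOrthoᵢ b) :
    ∑ i, (SignType.sign (mulForm f ε (b i) (b i)) : ℤ) = traceSignature f := by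
  obtain ⟨s, hs⟩ := isSquare_one_tmul hε
  rw [← pow_two] at hs
  have hunit : IsUnit s := by
    rw [← isUnit_pow_iff two_ne_zero, ← hs]
    exact hε0.isUnit.map (Algebra.TensorProduct.includeRight : K →ₐ[ℚ] ℝ ⊗[ℚ] K)
  have hequiv := mulForm_sq_equivalent_mulForm_one (realExtension f) hunit
  have hortho : (mulForm (realExtension f) (s ^ 2)).IsOrthoᵢ (b.baseChange ℝ) := by
    intro i j hij
    simp [Function.onFun, ← hs, mulForm_realExtension_tmul,
      show mulForm f ε (b i) (b j) = 0 from hb hij]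
  rw [traceSignature, ← hequiv.sigPos_eq, ← hequiv.sigNeg_eq,
    ← sum_sign_eq_sigPos_sub_sigNeg hortho]
  refine Finset.sum_congr rfl fun i _ => ?_
  rw [← hs, Module.Basis.baseChange_apply, mulForm_realExtension_tmul]
  exact congrArg _ (StrictMono.sign_comp (f := Rat.castHom ℝ) Rat.cast_strictMono _).symm

end RealForm

section Diagonalisation

variable {K} {f : K →ₗ[ℚ] ℚ} {τ : 𝓞 K →+ ℤ}

lemma exists_integral_orthogonal_basis (f : K →ₗ[ℚ] ℚ) (z : K) :
    ∃ (b : Module.Basis (Fin (Module.finrank ℚ K)) ℚ K) (v : Fin (Module.finrank ℚ K) → 𝓞 K),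
      (∀ i, b i = v i) ∧ (mulForm f z).IsOrthoᵢ b := by
  have : Invertible (2 : ℚ) := invertibleOfNonzero two_ne_zero
  obtain ⟨b, hb⟩ := LinearMap.BilinForm.exists_orthogonal_basis (mulForm_isSymm f z)
  choose d hd hint using fun i =>
    ((IsFractionRing.isAlgebraic_iff ℤ ℚ K).mpr (.of_finite ℚ (b i))).exists_integral_multiple
  have hdunit (i) : IsUnit (d i : ℚ) := IsUnit.mk0 _ (Int.cast_ne_zero.mpr (hd i))
  refine ⟨b.isUnitSMul hdunit, fun i => ⟨d i • b i, hint i⟩, fun i => ?_, fun i j hij => ?_⟩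
  · exact (b.isUnitSMul_apply hdunit i).trans (Int.cast_smul_eq_zsmul ℚ (d i) (b i))
  · simp [Function.onFun, Module.Basis.isUnitSMul_apply,
      show mulForm f z (b i) (b j) = 0 from hb hij]

lemma isOrthogonalFrame_of_isOrthoᵢ (hf : f ≠ 0) (hτ : ∀ x : 𝓞 K, (τ x : ℚ) = f x) {ε : 𝓞 K}
    (hε : ε ≠ 0) {ι : Type*} [Finite ι] {b : Module.Basis ι ℚ K} {v : ι → 𝓞 K}
    (hbv : ∀ i, b i = v i) (hb : (mulForm f ε).IsOrthoᵢ b) : IsOrthogonalFrame τ ε v where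
  apply_eq_zero i j hij := by
    have : mulForm f ε (b i) (b j) = 0 := hb hij
    rw [← Int.cast_inj (α := ℚ), hτ, ← Int.cast_zero]
    simpa [mulForm_apply, hbv] using this
  apply_ne_zero i := by
    have := hb.not_isOrtho_basis_self_of_separatingLeft
      (mulForm_separatingLeft hf (RingOfIntegers.coe_ne_zero_iff.mpr hε)) i
    rw [← Int.cast_ne_zero (α := ℚ), hτ]
    simpa [mulForm_apply, hbv, pow_two] using this
  mem_span x hx := by
    let _ := Fintype.ofFinite ι
    choose k hk using hx
    have hrepr (i) : b.repr x i = k i := by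
      have hne := hb.not_isOrtho_basis_self_of_separatingLeft
        (mulForm_separatingLeft hf (RingOfIntegers.coe_ne_zero_iff.mpr hε)) i
      refine mul_right_cancel₀ hne ?_
      rw [← apply_basis_eq_repr_mul hb, mulForm_apply, mulForm_apply, hbv, mul_comm (k i : ℚ)]
      have := congrArg (Int.cast : ℤ → ℚ) (hk i)
      rw [Int.cast_mul, hτ, hτ] at this
      simpa [pow_two, mul_assoc] using this
    refine (Submodule.mem_span_range_iff_exists_fun ℤ).mpr ⟨k, RingOfIntegers.coe_injective ?_⟩
    refine (map_sum _ _ _).trans (Eq.trans ?_ (b.sum_repr (x : K)))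
    refine Finset.sum_congr rfl fun i _ => ?_
    rw [hrepr, hbv, Int.cast_smul_eq_zsmul, map_zsmul]

theorem exists_traceGaussSum_sq_eq_of_nonneg (hf : f ≠ 0) (hτ : ∀ x : 𝓞 K, (τ x : ℚ) = f x)
    {ε : 𝓞 K} (hε0 : ε ≠ 0) (hε : ∀ φ : K →+* ℝ, 0 ≤ φ ε) :
    ∃ D : ℕ, D ≠ 0 ∧ ∀ (N : ℕ) [NeZero N], D ∣ N → ∃ r : ℝ, 0 < r ∧
      traceGaussSum τ (N ^ 2) ε =
        r * Complex.exp (traceSignature f * (Real.pi * Complex.I / 4)) := by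
  obtain ⟨b, v, hbv, hb⟩ := exists_integral_orthogonal_basis f (ε : K)
  have hframe := isOrthogonalFrame_of_isOrthoᵢ hf hτ hε0 hbv hb
  refine ⟨∏ i, 2 * (τ (ε * v i ^ 2)).natAbs, ?_, fun N _ hN => ?_⟩
  · simpa [Finset.prod_ne_zero_iff] using hframe.apply_ne_zero
  have hdvd (i) : 2 * τ (ε * v i ^ 2) ∣ N := by
    have := Int.natCast_dvd_natCast.mpr ((Finset.dvd_prod_of_mem _ (Finset.mem_univ i)).trans hN)
    rwa [Nat.cast_mul, Int.natCast_natAbs, Nat.cast_ofNat, ← abs_two, ← abs_mul, abs_dvd] at this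
  have hsign : ∑ i, (τ (ε * v i ^ 2)).sign = traceSignature f := by
    rw [← sum_sign_mulForm_eq_traceSignature f (RingOfIntegers.coe_ne_zero_iff.mpr hε0) hε hb]
    refine Finset.sum_congr rfl fun i _ => ?_
    rw [Int.sign_eq_sign, ← sign_intCast (α := ℚ), hτ, mulForm_apply, hbv]
    simp [pow_two]
  rw [← hsign]
  exact hframe.exists_traceGaussSum_sq_eq hdvd

end Diagonalisation

end Signature

section PrimitiveFunctional

open scoped nonZeroDivisors

lemma exists_mem_forall_mem_exists_eq_smul_add {R F : Type*} [CommRing R] [IsDedekindDomain R]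
    [Field F] [Algebra R F] [IsFractionRing R F] {d : FractionalIdeal R⁰ F} (hd : d ≠ 0) {a : R}
    (ha : a ≠ 0) : ∃ c ∈ d, ∀ z ∈ d, ∃ b : R, ∃ w ∈ d, z = b • c + a • w := by
  have hle : FractionalIdeal.spanSingleton R⁰ (algebraMap R F a) * d ≤ d :=
    mul_le_of_le_one_left' (FractionalIdeal.spanSingleton_le_iff_mem.mpr
      (FractionalIdeal.coe_mem_one R⁰ a))
  obtain ⟨c, hc⟩ := IsDedekindDomain.exists_add_spanSingleton_mul_eq hle
    (mul_ne_zero (by simpa [FractionalIdeal.spanSingleton_eq_zero_iff] using ha) hd) one_ne_zero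
  rw [mul_one, FractionalIdeal.ext_iff] at hc
  refine ⟨c, (hc c).mp ?_, fun z hz => ?_⟩
  · exact (FractionalIdeal.mem_add _ _ _).mpr
      ⟨0, FractionalIdeal.zero_mem _, c, FractionalIdeal.mem_spanSingleton_self _ c, zero_add c⟩
  · obtain ⟨y, hy, x, hx, rfl⟩ := (FractionalIdeal.mem_add _ _ _).mp ((hc z).mpr hz)
    obtain ⟨w, hw, rfl⟩ := FractionalIdeal.mem_singleton_mul.mp hy
    obtain ⟨b, rfl⟩ := (FractionalIdeal.mem_spanSingleton R⁰).mp hx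
    exact ⟨b, w, hw, by rw [Algebra.smul_def a, add_comm]⟩

lemma exists_addMonoidHom_intCast_eq {A : Type*} [AddGroup A] (f : A →+ ℚ)
    (hf : ∀ x, f x ∈ (Int.castAddHom ℚ).range) : ∃ τ : A →+ ℤ, ∀ x, (τ x : ℚ) = f x := by
  choose t ht using hf
  exact ⟨.mk' t fun x y => Int.cast_injective (α := ℚ) (by
    simpa using (ht (x + y)).trans ((map_add f x y).trans (by rw [← ht, ← ht]; simp))), ht⟩

variable {K}

lemma not_natCast_dvd_one {p : ℕ} (hp : p ≠ 1) : ¬ (p : 𝓞 K) ∣ 1 := by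
  rintro h
  have := map_dvd (Algebra.norm ℤ) h
  rw [← map_natCast (algebraMap ℤ (𝓞 K)), Algebra.norm_algebraMap, map_one] at this
  have hunit := (isUnit_pow_iff Module.finrank_pos.ne').mp (isUnit_of_dvd_one this)
  exact hp (mod_cast Int.isUnit_iff_natAbs_eq.mp hunit)

lemma exists_intCast_eq_traceForm {w : K}
    (hw : w ∈ FractionalIdeal.dual ℤ ℚ (1 : FractionalIdeal (𝓞 K)⁰ K)) (x : 𝓞 K) :
    ∃ t : ℤ, (t : ℚ) = Algebra.traceForm ℚ K w x :=
  (FractionalIdeal.mem_dual (one_ne_zero' (FractionalIdeal (𝓞 K)⁰ K))).mp hw x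
    (FractionalIdeal.coe_mem_one _ x)

/-- Writing `d` for the dual of `𝓞 K`, the element `x / p` lies in the dual of `d`, which is
`𝓞 K`. -/
lemma natCast_dvd_of_forall_traceForm_eq {p : ℕ} (hp : p ≠ 0) {c : K}
    (hc : ∀ z ∈ FractionalIdeal.dual ℤ ℚ (1 : FractionalIdeal (𝓞 K)⁰ K), ∃ b : 𝓞 K,
      ∃ w ∈ FractionalIdeal.dual ℤ ℚ (1 : FractionalIdeal (𝓞 K)⁰ K), z = b • c + (p : 𝓞 K) • w)
    {x : 𝓞 K} (hx : ∀ y : 𝓞 K, ∃ t : ℤ, Algebra.traceForm ℚ K c (x * y : 𝓞 K) = p * t) :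
    (p : 𝓞 K) ∣ x := by
  suffices hmem : (x / p : K) ∈ (1 : FractionalIdeal (𝓞 K)⁰ K) by
    obtain ⟨y, hy⟩ := (FractionalIdeal.mem_one_iff _).mp hmem
    refine ⟨y, RingOfIntegers.coe_injective ?_⟩
    rw [map_mul, hy, map_natCast, mul_div_cancel₀ _ (Nat.cast_ne_zero.mpr hp)]
  rw [← FractionalIdeal.dual_dual ℤ ℚ 1,
    FractionalIdeal.mem_dual (FractionalIdeal.dual_ne_zero ℤ ℚ
      (one_ne_zero' (FractionalIdeal (𝓞 K)⁰ K)))]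
  intro z hz
  obtain ⟨b, w, hw, rfl⟩ := hc z hz
  obtain ⟨t, ht⟩ := exists_intCast_eq_traceForm hw x
  obtain ⟨s, hs⟩ := hx b
  have hsplit : (x / p : K) * (b • c + (p : 𝓞 K) • w) =
      (p⁻¹ : ℚ) • (c * (x * b : 𝓞 K)) + w * x := by
    simp only [Algebra.smul_def, map_mul, map_natCast, map_inv₀]
    field_simp
  refine ⟨s + t, ?_⟩
  rw [Algebra.traceForm_apply] at ht hs ⊢
  rw [hsplit, LinearMap.map_add, LinearMap.map_smul, hs, ← ht, smul_eq_mul,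
    inv_mul_cancel_left₀ (Nat.cast_ne_zero.mpr hp), eq_intCast, Int.cast_add]

theorem exists_primitive_functional {p : ℕ} (hp0 : p ≠ 0) (hp1 : p ≠ 1) :
    ∃ f : K →ₗ[ℚ] ℚ, f ≠ 0 ∧ ∃ τ : 𝓞 K →+ ℤ, (∀ x : 𝓞 K, (τ x : ℚ) = f x) ∧
      ∀ x, (∀ y, (p : ℤ) ∣ τ (x * y)) → (p : 𝓞 K) ∣ x := by
  obtain ⟨c, hc, hgen⟩ := exists_mem_forall_mem_exists_eq_smul_add
    (FractionalIdeal.dual_ne_zero ℤ ℚ (one_ne_zero' (FractionalIdeal (𝓞 K)⁰ K)))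
    (Nat.cast_ne_zero.mpr hp0)
  obtain ⟨τ, hτ⟩ := exists_addMonoidHom_intCast_eq
    ((Algebra.traceForm ℚ K c).toAddMonoidHom.comp (algebraMap (𝓞 K) K).toAddMonoidHom)
    fun x => exists_intCast_eq_traceForm hc x
  have hprim (x : 𝓞 K) (hx : ∀ y, (p : ℤ) ∣ τ (x * y)) : (p : 𝓞 K) ∣ x :=
    natCast_dvd_of_forall_traceForm_eq hp0 hgen fun y =>
      (hx y).imp fun t ht => by simpa [ht] using (hτ (x * y)).symm
  refine ⟨Algebra.traceForm ℚ K c, fun hf => ?_, τ, hτ, hprim⟩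
  refine not_natCast_dvd_one (K := K) hp1 (hprim 1 fun y => ?_)
  have hy := hτ (1 * y)
  rw [AddMonoidHom.comp_apply, LinearMap.toAddMonoidHom_coe, hf, LinearMap.zero_apply,
    Int.cast_eq_zero] at hy
  exact hy ▸ dvd_zero _

end PrimitiveFunctional

section DyadicQuotients

lemma isPrimitive_compAddMonoidHom {R S : Type*} [CommRing R] [CommRing S] {ψ : AddChar R ℂ}
    (hψ : ψ.IsPrimitive) {f : S →+ R} (hf : Function.Injective f)
    (hmul : ∀ s r, ∃ t, f (t * s) = r * f s) : (ψ.compAddMonoidHom f).IsPrimitive := by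
  intro s hs h1
  obtain ⟨r, hr⟩ := exists_addChar_mul_ne_one hψ ((map_ne_zero_iff f hf).mpr hs)
  obtain ⟨t, ht⟩ := hmul s r
  refine hr ?_
  rw [← ht, mul_comm]
  exact DFunLike.congr_fun h1 t

open Classical in
theorem gaussCorrelation_eq_zero_of_ringEquiv_pi {R ι : Type*} [CommRing R] [Fintype R]
    [Fintype Rˣ] [Finite ι] {S : ι → Type*} [∀ i, CommRing (S i)] (φ : R ≃+* ∀ i, S i)
    (hS : ∀ i, ∃ (p : S i) (e : ℕ), IsDyadicChainRing p e) {ψ : AddChar R ℂ}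
    (hψ : ψ.IsPrimitive) {u : R} (hu : ¬ IsSquare u) : gaussCorrelation ψ u = 0 := by
  have := Finite.of_equiv R φ.toEquiv
  have (i : ι) : Finite (S i) := Finite.of_surjective _ (Function.surjective_eval i)
  let _ := Fintype.ofFinite ι
  let _ (i : ι) := Fintype.ofFinite (S i)
  obtain ⟨i, hi⟩ : ∃ i, ¬ IsSquare (φ u i) := by
    by_contra! h
    choose w hw using h
    exact hu ⟨φ.symm w, φ.injective <| by rw [map_mul, φ.apply_symm_apply]; exact funext hw⟩
  set ψ' := ψ.compAddMonoidHom (φ.symm : (∀ i, S i) →+ R)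
  have hψ' : ψ'.IsPrimitive := isPrimitive_compAddMonoidHom hψ φ.symm.injective
    fun s r => ⟨φ r, by simp⟩
  have hψφ : ψ = ψ'.compAddMonoidHom (φ : R →+ ∀ i, S i) := by ext; simp [ψ']
  rw [hψφ, gaussCorrelation_ringEquiv, gaussCorrelation_pi]
  obtain ⟨p, e, h⟩ := hS i
  refine Finset.prod_eq_zero (Finset.mem_univ i) (h.gaussCorrelation_eq_zero ?_ hi)
  exact isPrimitive_compAddMonoidHom hψ' (Pi.single_injective i)
    fun s r => ⟨r i, Pi.single_mul_right (f := r) s⟩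

variable {O : Type*} [CommRing O] [IsDedekindDomain O]

section PrimePowerQuotient

variable {P : Ideal O} [P.IsPrime] {π : O}

lemma pow_notMem_pow_succ (hP : P ≠ ⊥) (hπ : π ∈ P) (hπ2 : π ∉ P ^ 2) (k : ℕ) :
    π ^ k ∉ P ^ (k + 1) := by
  have hprime : Prime P := Ideal.prime_of_isPrime hP ‹_›
  simp only [← Ideal.dvd_span_singleton] at hπ hπ2 ⊢
  obtain ⟨J, hJ⟩ := hπ
  rw [← Ideal.span_singleton_pow, hJ, mul_pow, pow_succ,
    mul_dvd_mul_iff_left (pow_ne_zero k hprime.ne_zero)]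
  exact fun hdvd => hπ2 (hJ ▸ pow_two P ▸ mul_dvd_mul_left P (hprime.dvd_of_dvd_pow hdvd))

lemma exists_sub_pow_mul_mem_pow_add (hP : P ≠ ⊥) (hπ : π ∈ P) (hπ2 : π ∉ P ^ 2) (m : ℕ) {i : ℕ}
    {c : O} (hc : c ∈ P ^ i) : ∃ d, c - π ^ i * d ∈ P ^ (i + m) := by
  induction m generalizing i c with
  | zero => exact ⟨0, by simpa using hc⟩
  | succ m ih =>
    obtain ⟨d, e, he, rfl⟩ := Ideal.exists_mul_add_mem_pow_succ hP (π ^ i) c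
      (Ideal.pow_mem_pow hπ i) (pow_notMem_pow_succ hP hπ hπ2 i) hc
    obtain ⟨d', hd'⟩ := ih he
    refine ⟨d + π * d', ?_⟩
    convert hd' using 1 <;> ring

lemma mk_pow_dvd_mk (hP : P ≠ ⊥) (hπ : π ∈ P) (hπ2 : π ∉ P ^ 2) {i n : ℕ} (hi : i ≤ n) {c : O}
    (hc : c ∈ P ^ i) : Ideal.Quotient.mk (P ^ n) π ^ i ∣ Ideal.Quotient.mk (P ^ n) c := by
  obtain ⟨d, hd⟩ := exists_sub_pow_mul_mem_pow_add hP hπ hπ2 (n - i) hc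
  rw [Nat.add_sub_cancel' hi, ← Ideal.Quotient.eq, map_mul, map_pow] at hd
  exact ⟨_, hd⟩

omit [IsDedekindDomain O] in
lemma exists_sub_sq_mem [P.IsMaximal] [Finite (O ⧸ P)] (h2 : 2 ∈ P) (x : O) :
    ∃ s, x - s ^ 2 ∈ P := by
  let _ := Ideal.Quotient.field P
  have h2' : (2 : O ⧸ P) = 0 := by
    rwa [← map_ofNat (Ideal.Quotient.mk P), Ideal.Quotient.eq_zero_iff_mem]
  have : CharP (O ⧸ P) 2 := CharTwo.of_one_ne_zero_of_two_eq_zero one_ne_zero h2'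
  obtain ⟨s, hs⟩ := FiniteField.isSquare_of_char_two (ringChar.eq_iff.mpr this)
    (Ideal.Quotient.mk P x)
  obtain ⟨s, rfl⟩ := Ideal.Quotient.mk_surjective s
  exact ⟨s, Ideal.Quotient.eq.mp (by rw [hs, map_pow, pow_two])⟩

lemma isDyadicChainRing_mk (hP : P ≠ ⊥) [Finite (O ⧸ P)] (hπ : π ∈ P) (hπ2 : π ∉ P ^ 2)
    {e : ℕ} (he : 0 < e) (h2 : 2 ∈ P ^ e) :
    IsDyadicChainRing (Ideal.Quotient.mk (P ^ (2 * e)) π) e where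
  e_pos := he
  pow_eq_zero := by
    rw [← map_pow, Ideal.Quotient.eq_zero_iff_mem]
    exact Ideal.pow_mem_pow hπ _
  pow_ne_zero := by
    rw [← map_pow, Ne, Ideal.Quotient.eq_zero_iff_mem]
    simpa [show 2 * e - 1 + 1 = 2 * e by lia] using pow_notMem_pow_succ hP hπ hπ2 (2 * e - 1)
  pow_dvd_two := by
    rw [← map_ofNat (Ideal.Quotient.mk (P ^ (2 * e)))]
    exact mk_pow_dvd_mk hP hπ hπ2 (by lia) h2
  isUnit_or_dvd x := by
    have : P.IsMaximal := Ideal.IsPrime.isMaximal ‹_› hP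
    obtain ⟨x, rfl⟩ := Ideal.Quotient.mk_surjective x
    by_cases hx : x ∈ P
    · exact .inr (by simpa using mk_pow_dvd_mk hP hπ hπ2 (i := 1) (by lia) (by simpa using hx))
    · exact .inl (Ideal.Quotient.isUnit_mk_pow_of_notMem P hx)
  exists_dvd_sub_sq x := by
    have : P.IsMaximal := Ideal.IsPrime.isMaximal ‹_› hP
    obtain ⟨x, rfl⟩ := Ideal.Quotient.mk_surjective x
    obtain ⟨s, hs⟩ := exists_sub_sq_mem (Ideal.pow_le_self he.ne' h2) x
    refine ⟨Ideal.Quotient.mk _ s, ?_⟩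
    have hdvd := mk_pow_dvd_mk hP hπ hπ2 (n := 2 * e) (i := 1) (by lia) (by rwa [pow_one])
    rwa [pow_one, map_sub, map_pow] at hdvd

lemma exists_isDyadicChainRing (hP : P ≠ ⊥) [Finite (O ⧸ P)] {e : ℕ} (he : 0 < e)
    (h2 : 2 ∈ P ^ e) : ∃ p : O ⧸ P ^ (2 * e), IsDyadicChainRing p e := by
  obtain ⟨π, hπ, hπ2⟩ := SetLike.exists_of_lt (Ideal.pow_succ_lt_pow hP 1)
  exact ⟨_, isDyadicChainRing_mk hP (by simpa using hπ) hπ2 he h2⟩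

end PrimePowerQuotient

open UniqueFactorizationMonoid in
open Classical in
lemma prod_pow_two_mul_count_normalizedFactors {I : Ideal O} (hI : I ≠ ⊥) :
    ∏ P ∈ (normalizedFactors I).toFinset, P ^ (2 * (normalizedFactors I).count P) = I ^ 2 := by
  conv_rhs => rw [← Ideal.prod_normalizedFactors_eq_self hI, Finset.prod_multiset_count]
  simp_rw [mul_comm 2, pow_mul, Finset.prod_pow]

open UniqueFactorizationMonoid in
open Classical in
theorem gaussCorrelation_natQuot_four_eq_zero [CharZero O] [Module.Finite ℤ O]
    [Fintype (NatQuot O 4)ˣ] {ψ : AddChar (NatQuot O 4) ℂ} (hψ : ψ.IsPrimitive)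
    {u : NatQuot O 4} (hu : ¬ IsSquare u) : gaussCorrelation ψ u = 0 := by
  set I := Ideal.span {(2 : O)} with hI
  have hI0 : I ≠ ⊥ := by simp [hI]
  have hI4 : I ^ 2 = Ideal.span {((4 : ℕ) : O)} := by
    rw [hI, Ideal.span_singleton_pow]
    norm_num
  have hprime (P : Ideal O) (hP : P ∈ (normalizedFactors I).toFinset) : Prime P :=
    prime_of_normalized_factor P (Multiset.mem_toFinset.mp hP)
  refine gaussCorrelation_eq_zero_of_ringEquiv_pi
    (IsDedekindDomain.quotientEquivPiOfFinsetProdEq _ _ _ hprime (fun _ _ _ _ => id)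
      ((prod_pow_two_mul_count_normalizedFactors hI0).trans hI4)) ?_ hψ hu
  rintro ⟨P, hP⟩
  have hP0 : P ≠ ⊥ := (hprime P hP).ne_zero
  have : P.IsPrime := Ideal.isPrime_of_prime (hprime P hP)
  have : Finite (O ⧸ P) := Ideal.finiteQuotientOfFreeOfNeBot P hP0
  refine (exists_isDyadicChainRing (e := (normalizedFactors I).count P) hP0
    (Multiset.count_pos.mpr (Multiset.mem_toFinset.mp hP)) ?_).imp fun p hp => ⟨_, hp⟩
  rw [← Ideal.dvd_span_singleton, ← hI]
  conv_rhs => rw [← Ideal.prod_normalizedFactors_eq_self hI0, Finset.prod_multiset_count]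
  exact Finset.dvd_prod_of_mem (fun P => P ^ (normalizedFactors I).count P) hP

end DyadicQuotients

section CountingModFour

open NatQuot

lemma isSquare_of_isSquare_val {M : Type*} [CommMonoid M] {u : Mˣ} (h : IsSquare (u : M)) :
    IsSquare u := by
  obtain ⟨w, hw⟩ := h
  have hwu : IsUnit w := isUnit_of_mul_isUnit_left (hw ▸ u.isUnit)
  exact ⟨hwu.unit, Units.ext hw⟩

variable {O : Type*} [CommRing O]

lemma natQuot_four_eq_zero : (4 : NatQuot O 4) = 0 := mod_cast natCast_self (O := O) 4

section IntegrallyClosed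

variable [IsDomain O] [CharZero O]

lemma two_mul_eq_zero_iff_two_dvd {z : NatQuot O 4} : 2 * z = 0 ↔ 2 ∣ z := by
  constructor
  · intro h
    obtain ⟨z, rfl⟩ := reduce_surjective z
    rw [← map_ofNat (reduce 4), ← map_mul, reduce_eq_zero_iff] at h
    obtain ⟨y, hy⟩ := h
    have hz : z = 2 * y := mul_left_cancel₀ two_ne_zero (by rw [hy]; push_cast; ring)
    exact ⟨reduce 4 y, by rw [hz, map_mul, map_ofNat]⟩
  · rintro ⟨y, rfl⟩
    linear_combination y * natQuot_four_eq_zero (O := O)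

lemma two_dvd_sub_one_of_four_dvd_sq_sub_one [IsIntegrallyClosed O] {y : O}
    (h : 4 ∣ y ^ 2 - 1) : 2 ∣ y - 1 := by
  obtain ⟨s, hs⟩ := h
  let F := FractionRing O
  have : CharZero F := charZero_of_injective_algebraMap (IsFractionRing.injective O F)
  have hs' : (algebraMap O F y) ^ 2 - 1 = 4 * algebraMap O F s := by
    rw [← map_pow, ← map_one (algebraMap O F), ← map_sub, hs, map_mul, map_ofNat]
  have hint : IsIntegral O ((algebraMap O F y - 1) / 2) := by
    refine ⟨.X ^ 2 + .X - .C s, by monicity!, ?_⟩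
    simp only [Polynomial.eval₂_sub, Polynomial.eval₂_add, Polynomial.eval₂_X_pow,
      Polynomial.eval₂_X, Polynomial.eval₂_C]
    linear_combination hs' / 4
  obtain ⟨z, hz⟩ := IsIntegrallyClosed.isIntegral_iff.mp hint
  refine ⟨z, IsFractionRing.injective O F ?_⟩
  rw [map_sub, map_mul, hz, map_one, map_ofNat, mul_div_cancel₀ _ two_ne_zero]

lemma sq_eq_one_iff_two_mul_sub_one_eq_zero [IsIntegrallyClosed O] {y : NatQuot O 4} :
    y ^ 2 = 1 ↔ 2 * (y - 1) = 0 := by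
  constructor
  · intro h
    obtain ⟨y, rfl⟩ := reduce_surjective y
    rw [← sub_eq_zero, ← map_pow, ← map_one (reduce 4), ← map_sub, reduce_eq_zero_iff] at h
    have hdvd := map_dvd (reduce 4) (two_dvd_sub_one_of_four_dvd_sq_sub_one (y := y) (mod_cast h))
    rwa [map_ofNat, map_sub, map_one, ← two_mul_eq_zero_iff_two_dvd] at hdvd
  · intro h
    obtain ⟨s, hs⟩ := two_mul_eq_zero_iff_two_dvd.mp h
    linear_combination (y + 1 + 2 * s) * hs + (s + s ^ 2) * natQuot_four_eq_zero (O := O)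

lemma card_ker_powMonoidHom_two [IsIntegrallyClosed O] :
    Nat.card (powMonoidHom 2 : (NatQuot O 4)ˣ →* (NatQuot O 4)ˣ).ker =
      Nat.card {z : NatQuot O 4 // 2 * z = 0} := by
  have hmem {g : (NatQuot O 4)ˣ} : g ∈ (powMonoidHom 2 : _ →* (NatQuot O 4)ˣ).ker ↔
      2 * ((g : NatQuot O 4) - 1) = 0 := by
    rw [← sq_eq_one_iff_two_mul_sub_one_eq_zero, MonoidHom.mem_ker, powMonoidHom_apply,
      Units.ext_iff, Units.val_pow_eq_pow_val, Units.val_one]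
  have hinv (z : {z : NatQuot O 4 // 2 * z = 0}) : (1 + z.1) * (1 + z.1) = 1 := by
    rw [← pow_two, sq_eq_one_iff_two_mul_sub_one_eq_zero, add_sub_cancel_left, z.2]
  exact Nat.card_congr
    { toFun := fun g => ⟨g.1 - 1, hmem.mp g.2⟩
      invFun := fun z => ⟨⟨1 + z, 1 + z, hinv z, hinv z⟩, hmem.mpr (by simp [z.2])⟩
      left_inv := fun g => by ext; simp
      right_inv := fun z => by ext; simp }

end IntegrallyClosed

variable [IsDedekindDomain O] [CharZero O] [Module.Finite ℤ O]

lemma card_natQuot (M : ℕ) : Nat.card (NatQuot O M) = M ^ Module.finrank ℤ O := by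
  rw [← Ideal.absNorm_span_natCast, Ideal.absNorm_apply, Submodule.cardQuot_apply]

lemma card_natQuot_two_torsion :
    Nat.card {z : NatQuot O 4 // 2 * z = 0} = 2 ^ Module.finrank ℤ O := by
  let f : NatQuot O 4 →+ NatQuot O 4 := AddMonoidHom.mulLeft 2
  have hker : Nat.card f.ker = Nat.card {z : NatQuot O 4 // 2 * z = 0} := rfl
  have hrange : Nat.card f.range = Nat.card {z : NatQuot O 4 // 2 * z = 0} :=
    Nat.card_congr <| Equiv.subtypeEquivRight fun z => by
      rw [two_mul_eq_zero_iff_two_dvd, dvd_def, AddMonoidHom.mem_range]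
      exact exists_congr fun y => eq_comm
  have h := f.ker.card_mul_index
  rw [AddSubgroup.index_ker, hker, hrange, card_natQuot, show 4 = 2 * 2 from rfl, mul_pow] at h
  exact Nat.mul_self_inj.mp h

lemma card_units_natQuot_four :
    Nat.card (NatQuot O 4)ˣ =
      2 ^ Module.finrank ℤ O * Nat.card (Subgroup.square (NatQuot O 4)ˣ) := by
  have hrange : (powMonoidHom 2 : _ →* (NatQuot O 4)ˣ).range = Subgroup.square (NatQuot O 4)ˣ := by
    ext
    simp [isSquare_iff_exists_sq, eq_comm]
  rw [← Subgroup.card_mul_index (powMonoidHom 2 : _ →* (NatQuot O 4)ˣ).ker, Subgroup.index_ker,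
    hrange, card_ker_powMonoidHom_two, card_natQuot_two_torsion]

lemma norm_quadGaussSum_sq_natQuot_four {ψ : AddChar (NatQuot O 4) ℂ} (hψ : ψ.IsPrimitive)
    (u : (NatQuot O 4)ˣ) : ‖quadGaussSum ψ u‖ ^ 2 = 8 ^ Module.finrank ℤ O := by
  have htwo (z : NatQuot O 4) (hz : 2 * z = 0) : z ^ 2 = 0 := by
    obtain ⟨y, rfl⟩ := two_mul_eq_zero_iff_two_dvd.mp hz
    linear_combination y ^ 2 * natQuot_four_eq_zero (O := O)
  rw [norm_quadGaussSum_sq hψ htwo, card_natQuot_two_torsion, ← Nat.card_eq_fintype_card,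
    card_natQuot]
  push_cast
  rw [← mul_pow]
  norm_num

lemma relIndex_square_sq_le {ψ : AddChar (NatQuot O 4) ℂ} (hψ : ψ.IsPrimitive)
    {U : Subgroup (NatQuot O 4)ˣ} (hQU : Subgroup.square (NatQuot O 4)ˣ ≤ U)
    (hmul : ∀ x ∈ U, ∀ y ∈ U, quadGaussSum ψ (x : NatQuot O 4) * quadGaussSum ψ (y : NatQuot O 4) =
      quadGaussSum ψ 1 * quadGaussSum ψ (x * y : NatQuot O 4)) :
    (Subgroup.square (NatQuot O 4)ˣ).relIndex U ^ 2 ≤ 2 ^ Module.finrank ℤ O := by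
  let _ := Fintype.ofFinite (NatQuot O 4)ˣ
  have hQ (g : (NatQuot O 4)ˣ) (q) (hq : q ∈ Subgroup.square (NatQuot O 4)ˣ) :
      quadGaussSum ψ (g * q : (NatQuot O 4)ˣ) = quadGaussSum ψ g := by
    obtain ⟨r, rfl⟩ := hq
    simpa [pow_two] using quadGaussSum_mul_sq ψ g r
  have horth (u : (NatQuot O 4)ˣ) (hu : u ∉ Subgroup.square (NatQuot O 4)ˣ) :
      ∑ v : (NatQuot O 4)ˣ, quadGaussSum ψ v *
        starRingEnd ℂ (quadGaussSum ψ (v * u : (NatQuot O 4)ˣ)) = 0 := by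
    simp_rw [Units.val_mul, ← gaussCorrelation_eq]
    exact gaussCorrelation_natQuot_four_eq_zero hψ fun h => hu (isSquare_of_isSquare_val h)
  have hindex := Subgroup.relIndex_mul_relIndex ⊥ _ U bot_le hQU
  have hcard := card_sq_le_of_multiplicative_on
    (B := fun g : (NatQuot O 4)ˣ => quadGaussSum ψ (g : NatQuot O 4))
    (by positivity) (norm_quadGaussSum_sq_natQuot_four hψ) hQU hQ horth (by simpa using hmul)
  rw [Subgroup.relIndex_bot_left, Subgroup.relIndex_bot_left] at hindex
  rw [card_units_natQuot_four, ← hindex, mul_pow, mul_assoc, ← pow_two, mul_comm] at hcard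
  exact Nat.le_of_mul_le_mul_right hcard (pow_pos Nat.card_pos 2)

end CountingModFour

section TotallyPositiveUnits

open NatQuot

section Reduction

variable {O : Type*} [CommRing O]

lemma traceChar_four_isPrimitive {τ : O →+ ℤ} (hτ : ∀ x, (∀ y, 2 ∣ τ (x * y)) → 2 ∣ x) :
    (traceChar τ 4).IsPrimitive := by
  refine fun s hs h1 => hs ?_
  obtain ⟨x, rfl⟩ := reduce_surjective s
  have h4 (y : O) : 4 ∣ τ (x * y) := by
    have hy := DFunLike.congr_fun h1 (reduce 4 y)
    rw [AddChar.mulShift_apply, ← map_mul, AddChar.one_apply, traceChar_reduce_eq_one_iff] at hy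
    exact mod_cast hy
  obtain ⟨z, rfl⟩ := hτ x fun y => (by norm_num : (2 : ℤ) ∣ 4).trans (h4 y)
  obtain ⟨w, rfl⟩ := hτ z fun y => by
    have hy := h4 y
    rw [mul_assoc, two_mul, map_add] at hy
    lia
  rw [reduce_eq_zero_iff]
  exact ⟨w, by push_cast; ring⟩

variable [Module.Finite ℤ O]

lemma traceGaussSum_mul_of_odd (τ : O →+ ℤ) {m : ℕ} [NeZero m] (hm : Odd m) (ε η : Oˣ) :
    traceGaussSum τ m ε * traceGaussSum τ m η =
      traceGaussSum τ m 1 * traceGaussSum τ m (ε * η : O) := by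
  have h2 : IsUnit (2 : NatQuot O m) := by
    obtain ⟨j, hj⟩ := hm
    have hm0 := congrArg (Nat.cast : ℕ → NatQuot O m) hj
    rw [natCast_self] at hm0
    push_cast at hm0
    exact IsUnit.of_mul_eq_one (-j) (by linear_combination hm0)
  unfold traceGaussSum
  rw [map_one, map_mul]
  exact quadGaussSum_mul_quadGaussSum_of_isUnit_two h2 (traceChar τ m)
    (Units.map (reduce m).toMonoidHom ε) (Units.map (reduce m).toMonoidHom η)

lemma norm_traceGaussSum_four_sq [IsDedekindDomain O] [CharZero O] {τ : O →+ ℤ}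
    (hτ : ∀ x, (∀ y, 2 ∣ τ (x * y)) → 2 ∣ x) (u : Oˣ) :
    ‖traceGaussSum τ 4 (u : O)‖ ^ 2 = 8 ^ Module.finrank ℤ O :=
  norm_quadGaussSum_sq_natQuot_four (traceChar_four_isPrimitive hτ)
    (Units.map (reduce 4).toMonoidHom u)

end Reduction

variable {K}

lemma eq_of_mul_eq_pos_mul {x y w z : ℂ} {r s : ℝ} (hr : 0 < r) (hs : 0 < s) (hz : z ≠ 0)
    (hx : x * w = r * z) (hy : y * w = s * z) (hxy : ‖x‖ = ‖y‖) : x = y := by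
  have hw : w ≠ 0 := by
    rintro rfl
    simp [hr.ne', hz] at hx
  have hrs : r = s := by
    have hx' := congrArg norm hx
    have hy' := congrArg norm hy
    rw [norm_mul, norm_mul, Complex.norm_of_nonneg hr.le] at hx'
    rw [norm_mul, norm_mul, Complex.norm_of_nonneg hs.le, ← hxy, hx'] at hy'
    exact mul_right_cancel₀ (norm_ne_zero_iff.mpr hz) hy'
  exact mul_right_cancel₀ hw (by rw [hx, hy, hrs])

variable {f : K →ₗ[ℚ] ℚ} {τ : 𝓞 K →+ ℤ}

lemma exists_odd_traceGaussSum_four_mul (hf : f ≠ 0) (hτf : ∀ x : 𝓞 K, (τ x : ℚ) = f x)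
    (hτ : ∀ x, (∀ y, 2 ∣ τ (x * y)) → 2 ∣ x) {s : Finset (𝓞 K)ˣ}
    (hs : ∀ u ∈ s, u ∈ totPosUnits K) :
    ∃ (m : ℕ) (_ : NeZero m), Odd m ∧ ∀ u ∈ s, ∃ r : ℝ, 0 < r ∧
      traceGaussSum τ 4 u * traceGaussSum τ (m ^ 2) u =
        r * Complex.exp (traceSignature f * (Real.pi * Complex.I / 4)) := by
  choose! D hD0 hD using fun (u : (𝓞 K)ˣ) (hu : u ∈ s) =>
    exists_traceGaussSum_sq_eq_of_nonneg hf hτf u.ne_zero fun φ => (hs u hu φ).le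
  obtain ⟨k, m, hm, hkm⟩ := Nat.exists_eq_two_pow_mul_odd (Finset.prod_ne_zero_iff.mpr hD0)
  have : NeZero m := ⟨hm.pos.ne'⟩
  have hN : (2 ^ (k + 1) * m) ^ 2 = 4 ^ (k + 1) * m ^ 2 := by
    rw [mul_pow, pow_right_comm]
    norm_num
  have hcop : (4 ^ (k + 1)).Coprime (m ^ 2) :=
    .pow _ _ ((Nat.coprime_two_left.mpr hm).pow_left 2)
  refine ⟨m, this, hm, fun u hu => ?_⟩
  obtain ⟨r, hr, h⟩ := hD u hu (2 ^ (k + 1) * m)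
    ((Finset.dvd_prod_of_mem D hu).trans ⟨2, by rw [hkm]; ring⟩)
  obtain ⟨t, ht, h4⟩ := exists_traceGaussSum_four_pow τ hτ k u
  simp_rw [hN] at h
  rw [traceGaussSum_mul τ ⟨2 ^ (k + 1), by rw [← mul_pow]; rfl⟩ ⟨m, pow_two m⟩ hcop, h4,
    mul_assoc] at h
  refine ⟨r / t, by positivity, ?_⟩
  rw [Complex.ofReal_div, div_mul_eq_mul_div, ← h,
    mul_div_cancel_left₀ _ (Complex.ofReal_ne_zero.mpr ht.ne')]

theorem traceGaussSum_four_mul_of_mem_totPosUnits (hf : f ≠ 0)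
    (hτf : ∀ x : 𝓞 K, (τ x : ℚ) = f x) (hτ : ∀ x, (∀ y, 2 ∣ τ (x * y)) → 2 ∣ x)
    {ε η : (𝓞 K)ˣ} (hε : ε ∈ totPosUnits K) (hη : η ∈ totPosUnits K) :
    traceGaussSum τ 4 (ε : 𝓞 K) * traceGaussSum τ 4 (η : 𝓞 K) =
      traceGaussSum τ 4 1 * traceGaussSum τ 4 (ε * η : 𝓞 K) := by
  classical
  obtain ⟨m, _, hm, h⟩ := exists_odd_traceGaussSum_four_mul hf hτf hτ (s := {ε, η, 1, ε * η})
    (by simp [hε, hη, one_mem, mul_mem])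
  simp only [Finset.forall_mem_insert, Finset.mem_singleton, forall_eq, Units.val_one,
    Units.val_mul] at h
  obtain ⟨⟨r₁, hr₁, h₁⟩, ⟨r₂, hr₂, h₂⟩, ⟨r₃, hr₃, h₃⟩, r₄, hr₄, h₄⟩ := h
  have hodd := traceGaussSum_mul_of_odd τ (hm.pow (n := 2)) ε η
  set Ω := Complex.exp (traceSignature f * (Real.pi * Complex.I / 4))
  refine eq_of_mul_eq_pos_mul (w := traceGaussSum τ (m ^ 2) ε * traceGaussSum τ (m ^ 2) η)
    (z := Ω ^ 2) (mul_pos hr₁ hr₂) (mul_pos hr₃ hr₄) (pow_ne_zero 2 (Complex.exp_ne_zero _))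
    ?_ ?_ ?_
  · rw [mul_mul_mul_comm, h₁, h₂]
    push_cast
    ring
  · rw [hodd, mul_mul_mul_comm, h₃, h₄]
    push_cast
    ring
  · have hnorm := norm_traceGaussSum_four_sq hτ
    have h1 := hnorm 1
    have hmul := hnorm (ε * η)
    rw [Units.val_one] at h1
    rw [Units.val_mul] at hmul
    rw [norm_mul, norm_mul, ← sq_eq_sq₀ (by positivity) (by positivity), mul_pow, mul_pow, hnorm ε,
      hnorm η, h1, hmul]

variable (K)

/-- Reduction of the units of `K` modulo `4`. -/
noncomputable def unitsModFour : (𝓞 K)ˣ →* (NatQuot (𝓞 K) 4)ˣ := Units.map (reduce 4).toMonoidHom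

theorem relIndex_comap_square_totPosUnits_sq_le :
    ((Subgroup.square (NatQuot (𝓞 K) 4)ˣ).comap (unitsModFour K)).relIndex (totPosUnits K) ^ 2 ≤
      2 ^ Module.finrank ℚ K := by
  obtain ⟨f, hf, τ, hτf, hτ⟩ := exists_primitive_functional (K := K) two_ne_zero (by norm_num)
  push_cast at hτ
  rw [Subgroup.relIndex_comap, ← Subgroup.relIndex_sup_right, ← RingOfIntegers.rank]
  refine relIndex_square_sq_le (traceChar_four_isPrimitive hτ) le_sup_right ?_
  intro x hx y hy
  obtain ⟨_, ⟨ε, hε, rfl⟩, _, ⟨g, rfl⟩, rfl⟩ := Subgroup.mem_sup.mp hx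
  obtain ⟨_, ⟨η, hη, rfl⟩, _, ⟨h, rfl⟩, rfl⟩ := Subgroup.mem_sup.mp hy
  have hsq (u g : (NatQuot (𝓞 K) 4)ˣ) :
      quadGaussSum (traceChar τ 4) ((u * (g * g) : (NatQuot (𝓞 K) 4)ˣ) : NatQuot (𝓞 K) 4) =
        quadGaussSum (traceChar τ 4) (u : NatQuot (𝓞 K) 4) := by
    rw [← pow_two, Units.val_mul, Units.val_pow_eq_pow_val, quadGaussSum_mul_sq]
  have hmul := traceGaussSum_four_mul_of_mem_totPosUnits hf hτf hτ hε hη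
  unfold traceGaussSum at hmul
  rw [map_one, map_mul] at hmul
  rw [← Units.val_mul, mul_mul_mul_comm, mul_mul_mul_comm g, hsq, hsq, hsq]
  exact hmul

end TotallyPositiveUnits

section UnitsFourPlus

open NatQuot

omit [NumberField K] in
lemma isUnit_natCast_OK2_of_odd {b : ℕ} (hb : Odd b) : IsUnit (b : OK2 K) := by
  have hpadic : IsUnit (b : ℤ_[2]) := by
    rw [PadicInt.isUnit_iff, PadicInt.norm_natCast_eq_one_iff]
    exact Nat.coprime_two_left.mpr hb
  have htensor := hpadic.map (Algebra.TensorProduct.includeRight : ℤ_[2] →ₐ[ℤ] 𝓞 K ⊗[ℤ] ℤ_[2])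
  rw [map_natCast] at htensor
  with_unfolding_all exact htensor

variable {K}

lemma isUnit_iota_of_isCoprime_two {x : 𝓞 K} (hx : IsCoprime x 2) : IsUnit (iota K x) := by
  have hx0 : x ≠ 0 := by
    rintro rfl
    exact not_natCast_dvd_one (K := K) (p := 2) (by norm_num)
      (isCoprime_zero_left.mp hx).dvd
  have hnorm : Ideal.absNorm (Ideal.span {x}) ≠ 0 := by
    rwa [Ne, Ideal.absNorm_eq_zero_iff, Ideal.span_singleton_eq_bot]
  obtain ⟨k, b, hb, hkb⟩ := Nat.exists_eq_two_pow_mul_odd hnorm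
  have hmem := Ideal.absNorm_mem (Ideal.span {x})
  rw [hkb, Ideal.mem_span_singleton] at hmem
  push_cast at hmem
  have hdvd := map_dvd (iota K) (hx.pow_right.dvd_of_dvd_mul_left hmem)
  rw [map_natCast] at hdvd
  exact isUnit_of_dvd_unit hdvd (isUnit_natCast_OK2_of_odd K hb)

variable (K)

lemma comap_square_inf_totPosUnits_le_unitsFourPlus :
    (Subgroup.square (NatQuot (𝓞 K) 4)ˣ).comap (unitsModFour K) ⊓ totPosUnits K ≤
      unitsFourPlus K := by
  rintro ε ⟨⟨g, hg⟩, hε⟩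
  refine ⟨hε, ?_⟩
  obtain ⟨y, hy⟩ := reduce_surjective (g : NatQuot (𝓞 K) 4)
  have hred : reduce 4 (ε - y ^ 2 : 𝓞 K) = 0 := by
    rw [map_sub, map_pow, hy, sub_eq_zero, pow_two, ← Units.val_mul, ← hg]
    rfl
  obtain ⟨s, hs⟩ := reduce_eq_zero_iff.mp hred
  push_cast at hs
  obtain ⟨w, hw⟩ := isUnit_iota_of_isCoprime_two (x := y)
    ⟨y * (ε⁻¹ : (𝓞 K)ˣ), 2 * s * (ε⁻¹ : (𝓞 K)ˣ), by
      linear_combination ε.mul_inv - (ε⁻¹ : (𝓞 K)ˣ) * hs⟩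
  refine ⟨iota K s * (w⁻¹ : (OK2 K)ˣ) ^ 2, w, ?_⟩
  change iota K ε = _
  rw [sub_eq_iff_eq_add.mp hs, map_add, map_mul, map_pow, map_ofNat, ← hw]
  have hinv : (w : OK2 K) * (w⁻¹ : (OK2 K)ˣ) = 1 := w.mul_inv
  linear_combination
    -4 * iota K s * ((w : OK2 K) * (w⁻¹ : (OK2 K)ˣ) + 1) * hinv

omit [NumberField K] in
lemma range_powMonoidHom_two_le_totPosUnits :
    (powMonoidHom 2 : (𝓞 K)ˣ →* (𝓞 K)ˣ).range ≤ totPosUnits K := by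
  rintro _ ⟨u, rfl⟩ φ
  have hu : φ (algebraMap (𝓞 K) K u) ≠ 0 := by simp
  rw [powMonoidHom_apply, Units.val_pow_eq_pow_val, map_pow, map_pow]
  positivity

lemma range_powMonoidHom_two_le_unitsFourPlus :
    (powMonoidHom 2 : (𝓞 K)ˣ →* (𝓞 K)ˣ).range ≤ unitsFourPlus K := by
  refine le_trans (le_inf ?_ (range_powMonoidHom_two_le_totPosUnits K))
    (comap_square_inf_totPosUnits_le_unitsFourPlus K)
  rintro _ ⟨u, rfl⟩
  exact ⟨unitsModFour K u, by simp [pow_two]⟩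

theorem relIndex_unitsFourPlus_totPosUnits_sq_le :
    (unitsFourPlus K).relIndex (totPosUnits K) ^ 2 ≤ 2 ^ Module.finrank ℚ K := by
  have hdvd := Subgroup.relIndex_dvd_of_le_left (totPosUnits K)
    (comap_square_inf_totPosUnits_le_unitsFourPlus K)
  rw [Subgroup.inf_relIndex_right] at hdvd
  refine (Nat.pow_le_pow_left (Nat.le_of_dvd (Nat.pos_of_ne_zero ?_) hdvd) 2).trans
    (relIndex_comap_square_totPosUnits_sq_le K)
  rw [Subgroup.relIndex_comap]
  exact ne_zero_of_dvd_ne_zero Nat.card_pos.ne' (Subgroup.relIndex_dvd_card _ _)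

end UnitsFourPlus

/-- Let `K` be a number field of degree `n` with `r₁ > 0` real places, and let `E_{K,4}⁺`
denote the group of totally positive units `ε ∈ E_K` whose image in `O_{K,2}ˣ` lies in
`(1 + 4·O_{K,2})·O_{K,2}ˣ²`.  Then
`dim_{𝔽₂}(E_{K,4}⁺/E_K²) ≥ dim_{𝔽₂}(E_K⁺/E_K²) − ⌊n/2⌋`, where `E_K⁺` is the group of
totally positive units of `K`. -/
theorem units_four_plus_rank (r₁ d₁ d₂ : ℕ)
    (hr₁ : Nat.card (K →+* ℝ) = r₁)
    (hr₁pos : 0 < r₁)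
    (hd₁ : Nat.card (unitsFourPlus K ⧸
      ((powMonoidHom 2 : (𝓞 K)ˣ →* (𝓞 K)ˣ).range).subgroupOf (unitsFourPlus K)) = 2 ^ d₁)
    (hd₂ : Nat.card (totPosUnits K ⧸
      ((powMonoidHom 2 : (𝓞 K)ˣ →* (𝓞 K)ˣ).range).subgroupOf (totPosUnits K)) = 2 ^ d₂) :
    d₂ - Module.finrank ℚ K / 2 ≤ d₁ := by
  have htower : 2 ^ d₁ * (unitsFourPlus K).relIndex (totPosUnits K) = 2 ^ d₂ := by
    rw [← hd₁, ← hd₂]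
    exact Subgroup.relIndex_mul_relIndex _ _ _ (range_powMonoidHom_two_le_unitsFourPlus K)
      inf_le_left
  have hpow : 2 ^ (2 * d₂) ≤ 2 ^ (2 * d₁ + Module.finrank ℚ K) :=
    calc 2 ^ (2 * d₂) = (2 ^ d₁) ^ 2 * (unitsFourPlus K).relIndex (totPosUnits K) ^ 2 := by
          rw [← mul_pow, htower, ← pow_mul, mul_comm]
      _ ≤ (2 ^ d₁) ^ 2 * 2 ^ Module.finrank ℚ K :=
          Nat.mul_le_mul_left _ (relIndex_unitsFourPlus_totPosUnits_sq_le K)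
      _ = 2 ^ (2 * d₁ + Module.finrank ℚ K) := by rw [← pow_mul, mul_comm d₁ 2, pow_add]
  have hle := (Nat.pow_le_pow_iff_right one_lt_two).mp hpow
  lia
end

section
/- Let K be a number field of degree n = [K:ℚ] and let O_{K,2} = O_K ⊗_ℤ ℤ₂. Then the 2-adic signature space V₂ = O_{K,2}ˣ/((1 + 4O_{K,2})·O_{K,2}ˣ²) is an elementary abelian 2-group of order 2ⁿ (equivalently, an F₂-vector space of dimension n). -/
open NumberField
open scoped TensorProduct

variable (K : Type*) [Field K] [NumberField K]

/-- The 2-adic signature space `V₂ = O_{K,2}ˣ/((1 + 4·O_{K,2})·O_{K,2}ˣ²)`. -/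
abbrev V2 := (OK2 K)ˣ ⧸ modFourSquares K

/-!
Reduction modulo `4` is a surjection `O_{K,2} → O_K/4O_K` with kernel `4O_{K,2}`. As `O_{K,2}` is
integral over the local ring `ℤ₂`, this kernel lies in its Jacobson radical, so units lift and `V₂`
is the cokernel of squaring on the finite group `(O_K/4O_K)ˣ`. That cokernel has the order of the
kernel, the group of units of square `1`. If `x² ≡ 1` modulo `4`, then `(x - 1)/2` is integral over
`O_K`, so these units are exactly the classes of `1 + 2z`, and `z ↦ 1 + 2z` identifies them with
`O_K/2O_K`, which has `2ⁿ` elements.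
-/

section LocalHom

variable {R S : Type*} [CommRing R] [CommRing S]

lemma map_algebraMap_le_jacobson_bot [Algebra R S] [Algebra.IsIntegral R S] {I : Ideal R}
    (hI : I ≤ (⊥ : Ideal R).jacobson) : I.map (algebraMap R S) ≤ (⊥ : Ideal S).jacobson := by
  refine le_sInf fun M ⟨_, hM⟩ ↦ Ideal.map_le_iff_le_comap.2 (hI.trans ?_)
  exact sInf_le ⟨bot_le, Ideal.isMaximal_comap_of_isIntegral_of_isMaximal M⟩

lemma isLocalHom_of_ker_le_jacobson_bot {f : R →+* S} (hf : Function.Surjective f)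
    (hker : RingHom.ker f ≤ (⊥ : Ideal R).jacobson) : IsLocalHom f := by
  refine ⟨fun a ha ↦ ?_⟩
  obtain ⟨b', hab'⟩ := ha.exists_right_inv
  obtain ⟨b, rfl⟩ := hf b'
  have hab : a * b - 1 ∈ RingHom.ker f := by
    rw [RingHom.mem_ker, map_sub, map_mul, map_one, hab', sub_self]
  exact isUnit_of_mul_isUnit_left (Ideal.isUnit_of_sub_one_mem_jacobson_bot _ (hker hab))

lemma mem_comap_unitsMap_range_powMonoidHom {f : R →+* S}
    (hf : Function.Surjective f) [hloc : IsLocalHom f] (n : ℕ) (w : Rˣ) :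
    w ∈ (powMonoidHom n).range.comap (Units.map f.toMonoidHom) ↔
      ∃ y : Rˣ, (w : R) - y ^ n ∈ RingHom.ker f := by
  have hiff (y : Rˣ) : powMonoidHom n (Units.map f.toMonoidHom y) = Units.map f.toMonoidHom w ↔
      (w : R) - y ^ n ∈ RingHom.ker f := by
    rw [RingHom.mem_ker, map_sub, map_pow, sub_eq_zero, Units.ext_iff]
    exact eq_comm
  rw [Subgroup.mem_comap, MonoidHom.mem_range,
    (IsLocalRing.surjective_units_map_of_local_ringHom f hf hloc).exists]
  exact exists_congr hiff

end LocalHom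

section PadicTensor

variable (p : ℕ) [Fact p.Prime] (n : ℕ) (R : Type*) [CommRing R]

/-- The isomorphism `(ℤ/N) ⊗_ℤ R ≃ R/NR`. -/
noncomputable def zmodTensorEquiv (N : ℕ) :
    ZMod N ⊗[ℤ] R ≃+* R ⧸ Ideal.span {(N : R)} :=
  (Algebra.TensorProduct.congr (Int.quotientSpanNatEquivZMod N).symm.toIntAlgEquiv
    (AlgEquiv.refl (R := ℤ) (A₁ := R))).toRingEquiv.trans <|
  (Algebra.TensorProduct.quotIdealMapEquivQuotTensor R
    (Ideal.span {(N : ℤ)})).symm.toRingEquiv.trans <|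
  Ideal.quotEquivOfEq (by rw [Ideal.map_span, Set.image_singleton, map_natCast])

/-- Reduction modulo `p ^ n` on the base change of `R` to `ℤ_p`, with values in `R/pⁿR`. -/
noncomputable def padicTensorReduction :
    ℤ_[p] ⊗[ℤ] R →+* R ⧸ Ideal.span {((p ^ n : ℕ) : R)} :=
  (zmodTensorEquiv R (p ^ n)).toRingHom.comp
    (Algebra.TensorProduct.map (PadicInt.toZModPow n).toIntAlgHom (AlgHom.id ℤ R)).toRingHom

lemma padicTensorReduction_surjective : Function.Surjective (padicTensorReduction p n R) :=
  (zmodTensorEquiv R (p ^ n)).surjective.comp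
    (TensorProduct.map_surjective (ZMod.ringHom_surjective (PadicInt.toZModPow n))
      Function.surjective_id)

lemma ker_padicTensorReduction :
    RingHom.ker (padicTensorReduction p n R) =
      (Ideal.span {(p : ℤ_[p]) ^ n}).map (algebraMap ℤ_[p] (ℤ_[p] ⊗[ℤ] R)) := by
  rw [← PadicInt.ker_toZModPow]
  exact (RingHom.ker_equiv_comp _ (zmodTensorEquiv R (p ^ n))).trans
    (Algebra.TensorProduct.rTensor_ker _ (ZMod.ringHom_surjective (PadicInt.toZModPow n)))

variable {n} in
lemma isLocalHom_padicTensorReduction [Algebra.IsIntegral ℤ R] (hn : n ≠ 0) :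
    IsLocalHom (padicTensorReduction p n R) := by
  refine isLocalHom_of_ker_le_jacobson_bot (padicTensorReduction_surjective p n R) ?_
  rw [ker_padicTensorReduction]
  refine map_algebraMap_le_jacobson_bot ?_
  rw [IsLocalRing.jacobson_eq_maximalIdeal _ bot_ne_top, PadicInt.maximalIdeal_eq_span_p,
    Ideal.span_singleton_le_span_singleton]
  exact dvd_pow_self _ hn

end PadicTensor

section SquaresModFour

variable (R : Type*) [CommRing R]

/-- The homomorphism `z ↦ 1 + 2z` from the additive group of `R` to the units of `R/4R`. For
`R` integrally closed it parametrizes the units of square `1`. -/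
def oneAddTwoMul : Multiplicative R →* (R ⧸ Ideal.span {(4 : R)})ˣ :=
  MonoidHom.toHomUnits
    { toFun z := Ideal.Quotient.mk _ (1 + 2 * z.toAdd)
      map_one' := by rw [toAdd_one, mul_zero, add_zero, map_one]
      map_mul' z w := by
        rw [← map_mul, Ideal.Quotient.mk_eq_mk_iff_sub_mem, Ideal.mem_span_singleton, toAdd_mul]
        exact ⟨-(z.toAdd * w.toAdd), by ring⟩ }

lemma coe_oneAddTwoMul (z : Multiplicative R) :
    (oneAddTwoMul R z : R ⧸ Ideal.span {(4 : R)}) = Ideal.Quotient.mk _ (1 + 2 * z.toAdd) :=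
  rfl

lemma ker_oneAddTwoMul [IsDomain R] [NeZero (2 : R)] :
    (oneAddTwoMul R).ker = (Ideal.span {(2 : R)}).toAddSubgroup.toSubgroup := by
  ext z
  rw [MonoidHom.mem_ker, Units.ext_iff, coe_oneAddTwoMul, Units.val_one, map_add, map_one,
    add_eq_left, Ideal.Quotient.eq_zero_iff_mem, Ideal.mem_span_singleton]
  change _ ↔ z.toAdd ∈ Ideal.span {(2 : R)}
  rw [Ideal.mem_span_singleton, show (4 : R) = 2 * 2 by norm_num]
  exact mul_dvd_mul_iff_left two_ne_zero

variable {R} in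
lemma dvd_of_sq_dvd_sq_add_mul [IsDomain R] [IsIntegrallyClosed R] {b c y : R}
    (h : b ^ 2 ∣ y ^ 2 + b * c * y) : b ∣ y := by
  obtain ⟨d, hd⟩ := h
  rcases eq_or_ne b 0 with rfl | hb
  · simpa using hd
  set ι := algebraMap R (FractionRing R)
  have hιb : ι b ≠ 0 := by simpa [ι] using hb
  have hιd : ι y ^ 2 + ι b * ι c * ι y = ι b ^ 2 * ι d := by
    simpa only [map_add, map_mul, map_pow] using congrArg ι hd
  have hint : IsIntegral R (ι y / ι b) := by
    -- `y / b` is a root of `X ^ 2 + (c X - d)`.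
    refine ⟨Polynomial.X ^ 2 + (Polynomial.C c * Polynomial.X - Polynomial.C d),
      Polynomial.monic_X_pow_add (by compute_degree!), ?_⟩
    simp only [Polynomial.eval₂_add, Polynomial.eval₂_sub, Polynomial.eval₂_mul,
      Polynomial.eval₂_pow, Polynomial.eval₂_X, Polynomial.eval₂_C]
    field_simp
    linear_combination hιd
  obtain ⟨z, hz⟩ := IsIntegrallyClosed.isIntegral_iff.1 hint
  refine ⟨z, FaithfulSMul.algebraMap_injective R (FractionRing R) ?_⟩
  rw [map_mul, hz, mul_div_cancel₀ _ hιb]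

variable {R} in
lemma two_dvd_sub_one_iff_four_dvd_sq_sub_one [IsDomain R] [IsIntegrallyClosed R] {x : R} :
    2 ∣ x - 1 ↔ 4 ∣ x ^ 2 - 1 := by
  constructor
  · rintro ⟨z, hz⟩
    exact ⟨z ^ 2 + z, by linear_combination (x + 1 + 2 * z) * hz⟩
  · rintro ⟨c, hc⟩
    exact dvd_of_sq_dvd_sq_add_mul (c := 1) ⟨c, by linear_combination hc⟩

lemma range_oneAddTwoMul [IsDomain R] [IsIntegrallyClosed R] :
    (oneAddTwoMul R).range = (powMonoidHom 2 : (R ⧸ Ideal.span {(4 : R)})ˣ →* _).ker := by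
  have mem_ker_iff (u : (R ⧸ Ideal.span {(4 : R)})ˣ) {x : R} (hx : Ideal.Quotient.mk _ x = u.val) :
      u ∈ (powMonoidHom 2).ker ↔ 2 ∣ x - 1 := by
    rw [two_dvd_sub_one_iff_four_dvd_sq_sub_one, MonoidHom.mem_ker, powMonoidHom_apply,
      Units.ext_iff, Units.val_pow_eq_pow_val, ← hx, Units.val_one, ← map_pow,
      ← map_one (Ideal.Quotient.mk _), Ideal.Quotient.mk_eq_mk_iff_sub_mem,
      Ideal.mem_span_singleton]
  apply le_antisymm
  · rintro _ ⟨z, rfl⟩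
    exact (mem_ker_iff _ (coe_oneAddTwoMul R z).symm).2 ⟨z.toAdd, by ring⟩
  · intro u hu
    obtain ⟨x, hx⟩ := Ideal.Quotient.mk_surjective u.val
    obtain ⟨z, hz⟩ := (mem_ker_iff u hx).1 hu
    refine ⟨Multiplicative.ofAdd z, Units.ext ?_⟩
    rw [coe_oneAddTwoMul, toAdd_ofAdd, ← hz, add_sub_cancel, hx]

lemma index_squares_mod_four [IsDomain R] [IsIntegrallyClosed R] [NeZero (2 : R)]
    [Finite (R ⧸ Ideal.span {(4 : R)})] :
    (powMonoidHom 2 : (R ⧸ Ideal.span {(4 : R)})ˣ →* _).range.index =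
      Nat.card (R ⧸ Ideal.span {(2 : R)}) := by
  calc (powMonoidHom 2 : (R ⧸ Ideal.span {(4 : R)})ˣ →* _).range.index
      = Nat.card (powMonoidHom 2 : (R ⧸ Ideal.span {(4 : R)})ˣ →* _).ker := Subgroup.index_range
    _ = Nat.card (oneAddTwoMul R).range := by rw [range_oneAddTwoMul]
    _ = (oneAddTwoMul R).ker.index := (Subgroup.index_ker _).symm
    _ = Nat.card (R ⧸ Ideal.span {(2 : R)}) := by rw [ker_oneAddTwoMul]; rfl

end SquaresModFour

section OK2

omit [NumberField K]

/-- `O_{K,2}` with its factors exchanged, so that it is visibly a `ℤ₂`-algebra. The definition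
`OK2` is irreducible, so it has to be unfolded explicitly here. -/
noncomputable def OK2.ringEquivTensor : OK2 K ≃+* ℤ_[2] ⊗[ℤ] 𝓞 K :=
  RingEquiv.trans (by with_unfolding_all exact RingEquiv.refl (𝓞 K ⊗[ℤ] ℤ_[2]))
    (Algebra.TensorProduct.comm ℤ (𝓞 K) ℤ_[2]).toRingEquiv

lemma span_natCast_two_sq (R : Type*) [CommRing R] :
    Ideal.span {((2 ^ 2 : ℕ) : R)} = Ideal.span {(4 : R)} := by
  norm_num

/-- Reduction modulo `4` on `O_{K,2}`, with values in `O_K/4O_K`. -/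
noncomputable def OK2.reduction : OK2 K →+* 𝓞 K ⧸ Ideal.span {(4 : 𝓞 K)} :=
  (Ideal.quotEquivOfEq (span_natCast_two_sq (𝓞 K)) : _ →+* _).comp <|
    (padicTensorReduction 2 2 (𝓞 K)).comp (OK2.ringEquivTensor K)

lemma OK2.reduction_surjective : Function.Surjective (OK2.reduction K) :=
  (Ideal.quotEquivOfEq (span_natCast_two_sq (𝓞 K))).surjective.comp <|
    (padicTensorReduction_surjective 2 2 (𝓞 K)).comp (OK2.ringEquivTensor K).surjective

instance OK2.isLocalHom_reduction : IsLocalHom (OK2.reduction K) := by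
  have := isLocalHom_padicTensorReduction 2 (𝓞 K) two_ne_zero
  unfold OK2.reduction
  infer_instance

lemma OK2.ker_reduction : RingHom.ker (OK2.reduction K) = Ideal.span {(4 : OK2 K)} := by
  calc RingHom.ker (OK2.reduction K)
      = (RingHom.ker (padicTensorReduction 2 2 (𝓞 K))).comap (OK2.ringEquivTensor K) :=
        RingHom.ker_equiv_comp _ (Ideal.quotEquivOfEq (span_natCast_two_sq (𝓞 K)))
    _ = Ideal.span {(4 : OK2 K)} := by
        rw [ker_padicTensorReduction, ← Ideal.map_symm, Ideal.map_span, Ideal.map_span]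
        simp only [Set.image_singleton, map_pow, map_natCast]
        norm_num

lemma mem_modFourSquares_iff (w : (OK2 K)ˣ) :
    w ∈ modFourSquares K ↔ ∃ y : (OK2 K)ˣ, (4 : OK2 K) ∣ w - y ^ 2 := by
  refine exists_comm.trans (exists_congr fun y ↦ ⟨?_, ?_⟩)
  · rintro ⟨a, h⟩
    exact ⟨a * y ^ 2, by rw [h]; ring⟩
  · rintro ⟨s, hs⟩
    have hy : (y : OK2 K) * (y⁻¹ : (OK2 K)ˣ) = 1 := y.mul_inv
    refine ⟨s * (y⁻¹ : (OK2 K)ˣ) ^ 2, ?_⟩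
    linear_combination hs - 4 * s * (y * (y⁻¹ : (OK2 K)ˣ) + 1) * hy

lemma modFourSquares_eq_comap :
    modFourSquares K =
      (powMonoidHom 2).range.comap (Units.map (OK2.reduction K).toMonoidHom) := by
  ext w
  simp only [mem_modFourSquares_iff,
    mem_comap_unitsMap_range_powMonoidHom (OK2.reduction_surjective K), OK2.ker_reduction,
    Ideal.mem_span_singleton]

end OK2

lemma natCard_quotient_span_natCast (n : ℕ) :
    Nat.card (𝓞 K ⧸ Ideal.span {(n : 𝓞 K)}) = n ^ Module.finrank ℚ K := by
  rw [← RingOfIntegers.rank, ← Ideal.absNorm_span_natCast, Ideal.absNorm_apply,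
    Submodule.cardQuot_apply]

/-- Let `K` be a number field of degree `n = [K:ℚ]` and `O_{K,2} = O_K ⊗_ℤ ℤ₂`.  Then the
2-adic signature space `V₂ = O_{K,2}ˣ/((1 + 4·O_{K,2})·O_{K,2}ˣ²)` is an elementary abelian
2-group of order `2ⁿ`. -/
theorem v2_card :
    (∀ x : V2 K, x ^ 2 = 1) ∧ Nat.card (V2 K) = 2 ^ Module.finrank ℚ K := by
  refine ⟨fun x ↦ ?_, ?_⟩
  · obtain ⟨w, rfl⟩ := QuotientGroup.mk_surjective x
    rw [← QuotientGroup.mk_pow, QuotientGroup.eq_one_iff, mem_modFourSquares_iff]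
    exact ⟨w, by simp⟩
  · have hfinite : Finite (𝓞 K ⧸ Ideal.span {(4 : 𝓞 K)}) :=
      Ideal.finiteQuotientOfFreeOfNeBot _ (by simp)
    calc Nat.card (V2 K)
        = ((powMonoidHom 2).range.comap (Units.map (OK2.reduction K).toMonoidHom)).index := by
          rw [← modFourSquares_eq_comap]; rfl
      _ = (powMonoidHom 2 : (𝓞 K ⧸ Ideal.span {(4 : 𝓞 K)})ˣ →* _).range.index :=
          Subgroup.index_comap_of_surjective _ <|
            IsLocalRing.surjective_units_map_of_local_ringHom _ (OK2.reduction_surjective K)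
              inferInstance
      _ = Nat.card (𝓞 K ⧸ Ideal.span {(2 : 𝓞 K)}) := index_squares_mod_four (𝓞 K)
      _ = 2 ^ Module.finrank ℚ K := natCard_quotient_span_natCast K 2
end

section
/- Let F be a perfect field of characteristic 2 and let 𝒦, 𝒦′ be finite-dimensional F-vector spaces with nondegenerate symmetric bilinear forms whose dimensions have the same parity. Suppose S̃ is a maximal totally isotropic subspace of the orthogonal direct sum 𝒦 ⊥ 𝒦′ satisfying S̃ ∩ 𝒦 = S̃ ∩ 𝒦′ = 0. Then 𝒦 and 𝒦′ are isometric, and there is a unique isometry τ : 𝒦 → 𝒦′ such that S̃ = {w + τw : w ∈ 𝒦}; in particular dim 𝒦 = dim 𝒦′ = dim S̃. -/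
open Finset

variable {F W W' : Type*} [Field F] [PerfectField F] [CharP F 2]
  [AddCommGroup W] [Module F W] [FiniteDimensional F W]
  [AddCommGroup W'] [Module F W'] [FiniteDimensional F W']

/-- The bilinear form on the orthogonal direct sum `W ⊥ W'` of two bilinear form spaces. -/
def orthSumForm (b : W →ₗ[F] W →ₗ[F] F) (b' : W' →ₗ[F] W' →ₗ[F] F)
    (x y : W × W') : F :=
  b x.1 y.1 + b' x.2 y.2

/-- A subspace of `W ⊥ W'` is totally isotropic. -/
def IsTotallyIsotropic (b : W →ₗ[F] W →ₗ[F] F) (b' : W' →ₗ[F] W' →ₗ[F] F)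
    (S : Submodule F (W × W')) : Prop :=
  ∀ x ∈ S, ∀ y ∈ S, orthSumForm b b' x y = 0

/-- A subspace of `W ⊥ W'` is maximal totally isotropic. -/
def IsMaxTotallyIsotropic (b : W →ₗ[F] W →ₗ[F] F) (b' : W' →ₗ[F] W' →ₗ[F] F)
    (S : Submodule F (W × W')) : Prop :=
  IsTotallyIsotropic b b' S ∧
    ∀ T : Submodule F (W × W'), IsTotallyIsotropic b b' T → S ≤ T → T = S

/-!
Write `B` for the form on `𝒦 ⊥ 𝒦'`. Adjoining an isotropic vector of `S^⊥` to `S` keeps `S` totally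
isotropic, so maximality puts every such vector into `S`: the form induced on `S^⊥ / S` is
anisotropic. Where every element is a square, every plane contains an isotropic vector, because the
discriminant of `c ↦ B (y - c x) (y - c x)` is a square. Hence `dim S^⊥ ≤ dim S + 1`, and
`dim 𝒦 + dim 𝒦' ≤ 2 dim S + 1`. The trivial intersections make both projections of `S` injective, so
`dim S ≤ dim 𝒦` and `dim S ≤ dim 𝒦'`. With equal parities all three dimensions agree, `S` is the
graph of an isomorphism `τ`, and total isotropy says `b' (τ x) (τ y) = -b x y`, where the sign
disappears in characteristic 2.
-/

section Maximal

variable {R M : Type*} [CommSemiring R] [AddCommMonoid M] [Module R M]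
  {B : LinearMap.BilinForm R M} {S : Submodule R M} {x : M}

lemma sup_span_singleton_le_orthogonal (hB : B.IsRefl) (hS : S ≤ B.orthogonal S)
    (hx : x ∈ B.orthogonal S) (hxx : B x x = 0) :
    S ⊔ R ∙ x ≤ B.orthogonal (S ⊔ R ∙ x) := by
  have sup_le_orthogonal : S ⊔ R ∙ x ≤ B.orthogonal S :=
    sup_le hS ((Submodule.span_singleton_le_iff_mem x _).2 hx)
  have sup_le_ker : S ⊔ R ∙ x ≤ LinearMap.ker (B.flip x) :=
    sup_le hx ((Submodule.span_singleton_le_iff_mem x _).2 hxx)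
  exact sup_le (fun s hs t ht ↦ hB s t (sup_le_orthogonal ht s hs))
    ((Submodule.span_singleton_le_iff_mem x _).2 sup_le_ker)

lemma mem_of_maximal_of_mem_orthogonal (hB : B.IsRefl)
    (hS : Maximal (fun T : Submodule R M ↦ T ≤ B.orthogonal T) S)
    (hx : x ∈ B.orthogonal S) (hxx : B x x = 0) : x ∈ S :=
  hS.le_of_ge (sup_span_singleton_le_orthogonal hB hS.prop hx hxx) le_sup_left
    (Submodule.mem_sup_right (Submodule.mem_span_singleton_self x))

end Maximal

section SquareRoots

variable {K V : Type*} [Field K] [AddCommGroup V] [Module K V] {B : LinearMap.BilinForm K V}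
  {S : Submodule K V} {x : V}

lemma exists_apply_sub_smul_self_eq_zero (hsq : ∀ a : K, IsSquare a) (hB : B.IsSymm)
    (hx : B x x ≠ 0) (y : V) : ∃ c : K, B (y - c • x) (y - c • x) = 0 := by
  obtain ⟨r, hr⟩ := hsq (B x y ^ 2 - B x x * B y y)
  refine ⟨(B x y + r) / B x x, ?_⟩
  simp only [map_sub, map_smul, LinearMap.sub_apply, LinearMap.smul_apply, smul_eq_mul, hB.eq y x]
  field_simp
  linear_combination -hr

lemma orthogonal_le_sup_span_singleton (hsq : ∀ a : K, IsSquare a) (hB : B.IsSymm)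
    (hS : Maximal (fun T : Submodule K V ↦ T ≤ B.orthogonal T) S)
    (hx : x ∈ B.orthogonal S) (hxx : B x x ≠ 0) : B.orthogonal S ≤ S ⊔ K ∙ x := by
  intro y hy
  obtain ⟨c, hc⟩ := exists_apply_sub_smul_self_eq_zero hsq hB hxx y
  have sub_mem : y - c • x ∈ S := mem_of_maximal_of_mem_orthogonal hB.isRefl hS
    (Submodule.sub_mem _ hy (Submodule.smul_mem _ c hx)) hc
  rw [← sub_add_cancel y (c • x)]
  exact Submodule.add_mem_sup sub_mem (Submodule.smul_mem _ c (Submodule.mem_span_singleton_self x))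

variable [FiniteDimensional K V]

lemma finrank_orthogonal_le_finrank_add_one (hsq : ∀ a : K, IsSquare a) (hB : B.IsSymm)
    (hS : Maximal (fun T : Submodule K V ↦ T ≤ B.orthogonal T) S) :
    Module.finrank K (B.orthogonal S) ≤ Module.finrank K S + 1 := by
  by_cases h : ∃ x ∈ B.orthogonal S, B x x ≠ 0
  · obtain ⟨x, hx, hxx⟩ := h
    calc Module.finrank K (B.orthogonal S)
        ≤ Module.finrank K ↥(S ⊔ K ∙ x) :=
          Submodule.finrank_mono (orthogonal_le_sup_span_singleton hsq hB hS hx hxx)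
      _ ≤ Module.finrank K S + Module.finrank K (K ∙ x) :=
          Submodule.finrank_add_le_finrank_add_finrank _ _
      _ = Module.finrank K S + 1 := by
          rw [finrank_span_singleton (LinearMap.BilinForm.ne_zero_of_not_isOrtho_self x hxx)]
  · push Not at h
    exact (Submodule.finrank_mono fun x hx ↦
      mem_of_maximal_of_mem_orthogonal hB.isRefl hS hx (h x hx)).trans (Nat.le_succ _)

lemma finrank_le_two_mul_finrank_add_one (hsq : ∀ a : K, IsSquare a) (hB : B.IsSymm)
    (hS : Maximal (fun T : Submodule K V ↦ T ≤ B.orthogonal T) S) :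
    Module.finrank K V ≤ 2 * Module.finrank K S + 1 := by
  have := LinearMap.BilinForm.finrank_add_finrank_orthogonal hB.isRefl S
  have := finrank_orthogonal_le_finrank_add_one hsq hB hS
  lia

end SquareRoots

section Graph

lemma linearMap_graph_injective {R M N : Type*} [Semiring R] [AddCommMonoid M] [Module R M]
    [AddCommMonoid N] [Module R N] :
    Function.Injective (LinearMap.graph : (M →ₗ[R] N) → Submodule R (M × N)) := by
  intro f g h
  ext x
  have mem_graph : (x, f x) ∈ g.graph := h ▸ (LinearMap.mem_graph_iff f _).2 rfl
  exact (LinearMap.mem_graph_iff g _).1 mem_graph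

variable {K V V' : Type*} [DivisionRing K] [AddCommGroup V] [Module K V] [FiniteDimensional K V]
  [AddCommGroup V'] [Module K V'] [FiniteDimensional K V']

lemma exists_linearEquiv_eq_graph_of_injective {S : Submodule K (V × V')}
    (hfst : Function.Injective ((LinearMap.fst K V V').domRestrict S))
    (hsnd : Function.Injective ((LinearMap.snd K V V').domRestrict S))
    (hV : Module.finrank K S = Module.finrank K V)
    (hV' : Module.finrank K S = Module.finrank K V') :
    ∃ τ : V ≃ₗ[K] V', S = LinearMap.graph (τ : V →ₗ[K] V') :=
  Submodule.exists_equiv_eq_graph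
    ⟨hfst, (LinearMap.injective_iff_surjective_of_finrank_eq_finrank hV).1 hfst⟩
    ⟨hsnd, (LinearMap.injective_iff_surjective_of_finrank_eq_finrank hV').1 hsnd⟩

end Graph

section OrthSum

variable {K V V' : Type*} [Field K] [AddCommGroup V] [Module K V] [AddCommGroup V'] [Module K V']

/-- The form `orthSumForm b b'` of the orthogonal direct sum, bundled as a bilinear form so that
`LinearMap.BilinForm.orthogonal` applies to it. -/
def orthSumBilinForm (b : LinearMap.BilinForm K V) (b' : LinearMap.BilinForm K V') :
    LinearMap.BilinForm K (V × V') :=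
  b.compl₁₂ (LinearMap.fst K V V') (LinearMap.fst K V V') +
    b'.compl₁₂ (LinearMap.snd K V V') (LinearMap.snd K V V')

variable {b : LinearMap.BilinForm K V} {b' : LinearMap.BilinForm K V'}

lemma orthSumBilinForm_isSymm (hb : b.IsSymm) (hb' : b'.IsSymm) :
    (orthSumBilinForm b b').IsSymm :=
  ⟨fun x y ↦ congrArg₂ (· + ·) (hb.eq x.1 y.1) (hb'.eq x.2 y.2)⟩

lemma isTotallyIsotropic_iff_le_orthogonal {S : Submodule K (V × V')} :
    IsTotallyIsotropic b b' S ↔ S ≤ (orthSumBilinForm b b').orthogonal S :=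
  forall₂_comm

lemma isMaxTotallyIsotropic_iff_maximal {S : Submodule K (V × V')} :
    IsMaxTotallyIsotropic b b' S ↔
      Maximal (fun T ↦ T ≤ (orthSumBilinForm b b').orthogonal T) S := by
  simp only [IsMaxTotallyIsotropic, isTotallyIsotropic_iff_le_orthogonal, maximal_iff, eq_comm]

lemma isTotallyIsotropic_graph_iff {τ : V →ₗ[K] V'} :
    IsTotallyIsotropic b b' (LinearMap.graph τ) ↔ ∀ x y, b' (τ x) (τ y) = -b x y := by
  simp [IsTotallyIsotropic, orthSumForm, LinearMap.mem_graph_iff, eq_neg_iff_add_eq_zero, add_comm]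

variable [FiniteDimensional K V] [FiniteDimensional K V']

theorem diagonal_subspace_of_maximal_totally_isotropic_general (hsq : ∀ a : K, IsSquare a)
    (hb : b.IsSymm) (hb' : b'.IsSymm)
    (hpar : Module.finrank K V % 2 = Module.finrank K V' % 2) {S : Submodule K (V × V')}
    (hS : IsMaxTotallyIsotropic b b' S)
    (hSV : S ⊓ LinearMap.range (LinearMap.inl K V V') = ⊥)
    (hSV' : S ⊓ LinearMap.range (LinearMap.inr K V V') = ⊥) :
    (∃! τ : V ≃ₗ[K] V', (∀ x y : V, b' (τ x) (τ y) = -b x y) ∧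
      S = LinearMap.graph (τ : V →ₗ[K] V')) ∧
    Module.finrank K V = Module.finrank K V' ∧
    Module.finrank K V' = Module.finrank K S := by
  have fst_injective : Function.Injective ((LinearMap.fst K V V').domRestrict S) := by
    rwa [LinearMap.injective_domRestrict_iff, LinearMap.ker_fst, disjoint_iff]
  have snd_injective : Function.Injective ((LinearMap.snd K V V').domRestrict S) := by
    rwa [LinearMap.injective_domRestrict_iff, LinearMap.ker_snd, disjoint_iff]
  have le_finrank := LinearMap.finrank_le_finrank_of_injective fst_injective
  have le_finrank' := LinearMap.finrank_le_finrank_of_injective snd_injective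
  have finrank_le := finrank_le_two_mul_finrank_add_one hsq (orthSumBilinForm_isSymm hb hb')
    (isMaxTotallyIsotropic_iff_maximal.1 hS)
  rw [Module.finrank_prod] at finrank_le
  obtain ⟨τ, rfl⟩ := exists_linearEquiv_eq_graph_of_injective fst_injective snd_injective
    (by lia) (by lia)
  refine ⟨⟨τ, ⟨isTotallyIsotropic_graph_iff.1 hS.1, rfl⟩, fun σ hσ ↦ ?_⟩, by lia, by lia⟩
  exact LinearEquiv.toLinearMap_injective (linearMap_graph_injective hσ.2.symm)

end OrthSum

lemma isSquare_of_perfectRing_two {R : Type*} [CommSemiring R] [ExpChar R 2] [PerfectRing R 2]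
    (a : R) : IsSquare a := by
  obtain ⟨c, hc⟩ := surjective_frobenius R 2 a
  exact ⟨c, by rw [← hc, frobenius_def, sq]⟩

/-- Let `F` be a perfect field of characteristic 2 and let `𝒦 = W`, `𝒦′ = W'` be
finite-dimensional `F`-vector spaces with nondegenerate symmetric bilinear forms whose
dimensions have the same parity.  Suppose `S̃` is a maximal totally isotropic subspace of the
orthogonal direct sum `𝒦 ⊥ 𝒦′` satisfying `S̃ ∩ 𝒦 = S̃ ∩ 𝒦′ = 0`.  Then `𝒦` and `𝒦′` are
isometric, and there is a unique isometry `τ : 𝒦 → 𝒦′` such that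
`S̃ = {w + τw : w ∈ 𝒦}`; in particular `dim 𝒦 = dim 𝒦′ = dim S̃`. -/
theorem diagonal_subspace_of_maximal_totally_isotropic
    (b : W →ₗ[F] W →ₗ[F] F) (b' : W' →ₗ[F] W' →ₗ[F] F)
    (hsymm : ∀ x y, b x y = b y x) (hsymm' : ∀ x y, b' x y = b' y x)
    (hnd : ∀ x, (∀ y, b x y = 0) → x = 0) (hnd' : ∀ x, (∀ y, b' x y = 0) → x = 0)
    (hpar : Module.finrank F W % 2 = Module.finrank F W' % 2)
    (S : Submodule F (W × W'))
    (hS : IsMaxTotallyIsotropic b b' S)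
    (hSW : S ⊓ LinearMap.range (LinearMap.inl F W W') = ⊥)
    (hSW' : S ⊓ LinearMap.range (LinearMap.inr F W W') = ⊥) :
    (∃! τ : W ≃ₗ[F] W', (∀ x y : W, b' (τ x) (τ y) = b x y) ∧
      S = LinearMap.graph (τ : W →ₗ[F] W')) ∧
    Module.finrank F W = Module.finrank F W' ∧
    Module.finrank F W' = Module.finrank F S := by
  simpa only [CharTwo.neg_eq] using diagonal_subspace_of_maximal_totally_isotropic_general
    isSquare_of_perfectRing_two ⟨hsymm⟩ ⟨hsymm'⟩ hpar hS hSW hSW'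
end
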